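/- arXiv:1302.6094 — 5 statements merged into one kernel-verified Lean document; each statement's English description precedes it below -/
import Mathlib

section
/- For every integer d > 2 there exists a constant C (depending only on d) such that for all integers H ≥ 1, |E_d(H) − θ_d · 2^d · H^d| ≤ C · H^{d−1}. -/
/-!
Write `d = k + 1`, so that a monic polynomial of degree `d` is a vector `b = (a_0, …, a_k)` in the
box `[-H, H]^(k+1)`. The proof is inclusion–exclusion over the set of primes at which `b` is
Eisenstein. Call `b` good at `s` if `s` divides every `a_i` and `a_0 / s` is coprime to `s`; for
squarefree `s` this says that `b` is Eisenstein at each prime dividing `s`. Hence `∑ μ(s)` over the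
`s` at which `b` is good equals `0` if `b` is Eisenstein and `1` otherwise (`sum_moebius_goodAt`),
and only `s ≤ H` matter. Summing over the box (`inclusion_exclusion`),

  `(2H+1)^d - E_d(H) = ∑_{s ≤ H} μ(s) N(s)`,  `N(s) = (2⌊H/s⌋+1)^k · coprimeMultiples H s`.

A further Möbius sum over the divisors of `s` gives
`coprimeMultiples H s = 2 (H/s) φ(s)/s + O(τ(s))`, where `τ(s)` is the number of divisors, and so
`N(s) = (2H)^d φ(s)/s^(d+1) + O(H^(d-1) τ(s)/s^2)` (`term_bound`); here `d - 1 ≥ 2` is used. For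
`s > H` the main term alone is `O(H^(d-1) τ(s)/s^2)` (`tail_bound`), so the finite sum may be
compared termwise with the full series. As `∑ τ(s)/s^2` converges, the total error is `O(H^(d-1))`.
Finally, `∑ μ(s) φ(s)/s^(d+1)` is the Euler product `1 - θ_d` (`tsum_mainCoeff`), and
`(2H+1)^d = (2H)^d + O(H^(d-1))`.
-/

/-- `θ_d = 1 - ∏_p (1 - (p-1)/p^(d+1))`, product over all primes. -/
noncomputable def theta (d : ℕ) : ℝ :=
  1 - ∏' p : Nat.Primes, (1 - (((p : ℕ) : ℝ) - 1) / ((p : ℕ) : ℝ) ^ (d + 1))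

/-- `E_d(H)`: number of monic Eisenstein polynomials of degree `d` and height at most `H`.
A polynomial is represented by its coefficient vector `a : Fin (d+1) → ℤ`,
with `a i` the coefficient of `X^i`; monic means `a d = 1`. -/
noncomputable def Ecount (d H : ℕ) : ℕ :=
  Nat.card {a : Fin (d + 1) → ℤ //
    a (Fin.last d) = 1 ∧
    (∀ i : Fin (d + 1), i.val < d → |a i| ≤ (H : ℤ)) ∧
    ∃ p : ℕ, p.Prime ∧ (∀ i : Fin (d + 1), i.val < d → (p : ℤ) ∣ a i) ∧
      ¬ ((p : ℤ) ^ 2 ∣ a 0) ∧ ¬ ((p : ℤ) ∣ a (Fin.last d))}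

/-! ### Counting multiples in an interval -/

open ArithmeticFunction in
theorem sum_divisors_moebius (m : ℕ) :
    ∑ t ∈ m.divisors, moebius t = if m = 1 then 1 else 0 := by
  rw [← coe_mul_zeta_apply, moebius_mul_coe_zeta, one_apply]

theorem card_multiples (H n : ℕ) (hn : 0 < n) :
    ((Finset.Icc (-(H : ℤ)) H).filter (fun x => (n : ℤ) ∣ x)).card = 2 * (H / n) + 1 := by
  have hn' : (0 : ℤ) < n := by exact_mod_cast hn
  have : (Finset.Icc (-(H : ℤ)) H).filter (fun x => (n : ℤ) ∣ x) =
      (Finset.Icc (-((H / n : ℕ) : ℤ)) ((H / n : ℕ) : ℤ)).image (fun y => (n : ℤ) * y) := by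
    ext x
    simp only [Finset.mem_filter, Finset.mem_Icc, Finset.mem_image]
    constructor
    · rintro ⟨⟨h1, h2⟩, y, rfl⟩
      refine ⟨y, ⟨?_, ?_⟩, rfl⟩
      · have : -y ≤ ((H / n : ℕ) : ℤ) := by
          push_cast
          rw [Int.le_ediv_iff_mul_le hn']
          linarith
        linarith
      · push_cast
        rw [Int.le_ediv_iff_mul_le hn']
        linarith
    · rintro ⟨y, ⟨h1, h2⟩, rfl⟩
      have h3 : -y ≤ ((H / n : ℕ) : ℤ) := by linarith
      push_cast at h2 h3
      rw [Int.le_ediv_iff_mul_le hn'] at h2 h3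
      exact ⟨⟨by linarith, by linarith⟩, dvd_mul_right _ _⟩
  rw [this, Finset.card_image_of_injective _ (mul_right_injective₀ hn'.ne'), Int.card_Icc]
  omega

theorem abs_multiples_sub_le (H n : ℕ) (hn : 0 < n) :
    |((2 * (H / n) + 1 : ℕ) : ℝ) - 2 * (H : ℝ) / n| ≤ 1 := by
  have hn' : (0 : ℝ) < n := by exact_mod_cast hn
  have h1 : ((H / n : ℕ) : ℝ) ≤ H / n := Nat.cast_div_le
  have h2 : (H : ℝ) / n < (H / n : ℕ) + 1 := by
    rw [← Nat.floor_div_eq_div (K := ℝ)]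
    exact Nat.lt_floor_add_one _
  have h3 : 2 * (H : ℝ) / n = 2 * (H / n) := by ring
  rw [abs_le, h3]
  push_cast
  constructor <;> linarith

/-- The number of `x ∈ [-H, H]` that are `s` times an integer coprime to `s`. -/
noncomputable def coprimeMultiples (H s : ℕ) : ℕ :=
  ((Finset.Icc (-(H : ℤ)) H).filter
    (fun x => (s : ℤ) ∣ x ∧ Int.gcd (x / s) s = 1)).card

open ArithmeticFunction in
/-- The coprimality of `x / s` and `s` is detected by `∑ μ(t)` over their common divisors `t`. -/
theorem coprimeMultiples_eq (H s : ℕ) (hs : 0 < s) :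
    (coprimeMultiples H s : ℤ) =
      ∑ t ∈ s.divisors, moebius t * ((2 * (H / (s * t)) + 1 : ℕ) : ℤ) := by
  have key : ∀ x : ℤ, (if (s : ℤ) ∣ x ∧ Int.gcd (x / s) s = 1 then (1 : ℤ) else 0) =
      ∑ t ∈ s.divisors, if ((s * t : ℕ) : ℤ) ∣ x then moebius t else 0 := by
    intro x
    have hs' : (s : ℤ) ≠ 0 := by exact_mod_cast hs.ne'
    by_cases hx : (s : ℤ) ∣ x
    · obtain ⟨y, rfl⟩ := hx
      simp only [dvd_mul_right, true_and, Int.mul_ediv_cancel_left _ hs', Nat.cast_mul,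
        mul_dvd_mul_iff_left hs']
      rw [← sum_divisors_moebius, ← Finset.sum_filter]
      refine Finset.sum_congr ?_ fun _ _ => rfl
      ext t
      have h0 : Int.gcd y s ≠ 0 := by
        rw [Ne, Int.gcd_eq_zero_iff]; tauto
      simp only [Nat.mem_divisors, Finset.mem_filter]
      rw [Int.dvd_gcd_iff, Int.natCast_dvd_natCast]
      have := hs.ne'
      tauto
    · rw [if_neg (by tauto), Finset.sum_eq_zero]
      intro t _
      rw [if_neg]
      intro h
      exact hx (dvd_trans (by push_cast; exact dvd_mul_right _ _) h)
  rw [coprimeMultiples, Finset.card_filter]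
  push_cast
  rw [Finset.sum_congr rfl fun x _ => key x, Finset.sum_comm]
  refine Finset.sum_congr rfl fun t ht => ?_
  have ht0 : 0 < t := Nat.pos_of_mem_divisors ht
  rw [← Finset.sum_filter, Finset.sum_const, card_multiples H (s * t) (Nat.mul_pos hs ht0)]
  simp [mul_comm]

open ArithmeticFunction in
theorem totient_div_eq (s : ℕ) (hs : 0 < s) :
    ∑ t ∈ s.divisors, (moebius t : ℝ) / t = (Nat.totient s : ℝ) / s := by
  have h := (sum_eq_iff_sum_mul_moebius_eq (R := ℝ) (f := fun n => (Nat.totient n : ℝ))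
    (g := fun n => (n : ℝ))).1 (fun n _ => by exact_mod_cast Nat.sum_totient n) s hs
  rw [Nat.sum_divisorsAntidiagonal (fun i j => (moebius i : ℝ) * (j : ℝ))] at h
  rw [← h, Finset.sum_div]
  refine Finset.sum_congr rfl fun t ht => ?_
  have ht0 : (t : ℝ) ≠ 0 := by exact_mod_cast (Nat.pos_of_mem_divisors ht).ne'
  have hs0 : (s : ℝ) ≠ 0 := by exact_mod_cast hs.ne'
  rw [Nat.cast_div (Nat.dvd_of_mem_divisors ht) ht0]
  field_simp

theorem abs_moebius_real_le (t : ℕ) : |(ArithmeticFunction.moebius t : ℝ)| ≤ 1 := by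
  exact_mod_cast ArithmeticFunction.abs_moebius_le_one (n := t)

/-- The error is at most `1` for each divisor of `s` in `coprimeMultiples_eq`, and the main terms
add up by `φ(s)/s = ∑ μ(t)/t`. -/
theorem abs_coprimeMultiples_sub_le (H s : ℕ) (hs : 0 < s) :
    |(coprimeMultiples H s : ℝ) - 2 * ((H : ℝ) / s) * ((Nat.totient s : ℝ) / s)| ≤
      s.divisors.card := by
  have h : (coprimeMultiples H s : ℝ) = ∑ t ∈ s.divisors,
      (ArithmeticFunction.moebius t : ℝ) * ((2 * (H / (s * t)) + 1 : ℕ) : ℝ) := by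
    have h' := congrArg (Int.cast : ℤ → ℝ) (coprimeMultiples_eq H s hs)
    simpa only [Int.cast_sum, Int.cast_mul, Int.cast_natCast] using h'
  rw [h, ← totient_div_eq s hs, Finset.mul_sum, ← Finset.sum_sub_distrib]
  refine (Finset.abs_sum_le_sum_abs _ _).trans ?_
  rw [Finset.card_eq_sum_ones, Nat.cast_sum]
  refine Finset.sum_le_sum fun t ht => ?_
  have ht0 := Nat.pos_of_mem_divisors ht
  have e : (ArithmeticFunction.moebius t : ℝ) * ((2 * (H / (s * t)) + 1 : ℕ) : ℝ) -
      2 * ((H : ℝ) / s) * ((ArithmeticFunction.moebius t : ℝ) / t) =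
      (ArithmeticFunction.moebius t : ℝ) *
        (((2 * (H / (s * t)) + 1 : ℕ) : ℝ) - 2 * (H : ℝ) / ((s * t : ℕ) : ℝ)) := by
    push_cast
    rw [mul_sub]
    congr 1
    field_simp
  rw [e, abs_mul, Nat.cast_one]
  exact mul_le_one₀ (abs_moebius_real_le t) (abs_nonneg _)
    (abs_multiples_sub_le H _ (Nat.mul_pos hs ht0))

/-! ### Inclusion–exclusion over the Eisenstein primes -/

/-- The box `[-H, H]^(k+1)` of coefficient vectors `(a_0, …, a_k)`, the leading coefficient `1`
being left out. -/
noncomputable def box (k H : ℕ) : Finset (Fin (k + 1) → ℤ) :=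
  Fintype.piFinset fun _ => Finset.Icc (-(H : ℤ)) H

/-- `p` witnesses the Eisenstein condition for the monic polynomial with lower coefficients `b`. -/
def EisAt {k : ℕ} (b : Fin (k + 1) → ℤ) (p : ℕ) : Prop :=
  (∀ i, (p : ℤ) ∣ b i) ∧ ¬ ((p : ℤ) ^ 2 ∣ b 0)

/-- The extension of `EisAt` from primes to moduli `s`: every coefficient is divisible by `s`, and
`b 0 / s` is coprime to `s`. For squarefree `s` it holds exactly when every prime factor of `s`
satisfies `EisAt b`. -/
def GoodAt {k : ℕ} (b : Fin (k + 1) → ℤ) (s : ℕ) : Prop :=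
  (∀ i, (s : ℤ) ∣ b i) ∧ Int.gcd (b 0 / s) s = 1

theorem goodAt_iff_of_squarefree {k : ℕ} (b : Fin (k + 1) → ℤ) {s : ℕ} (hs : Squarefree s) :
    GoodAt b s ↔ ∀ p : ℕ, p.Prime → p ∣ s → EisAt b p := by
  have hs0 : s ≠ 0 := hs.ne_zero
  have hs0' : (s : ℤ) ≠ 0 := by exact_mod_cast hs0
  constructor
  · rintro ⟨h1, h2⟩ p hp hps
    refine ⟨fun i => dvd_trans (by exact_mod_cast hps) (h1 i), fun h => ?_⟩
    obtain ⟨c, hc⟩ := h1 0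
    rw [hc, Int.mul_ediv_cancel_left _ hs0'] at h2
    obtain ⟨u, rfl⟩ := hps
    have hp0 : (p : ℤ) ≠ 0 := by exact_mod_cast hp.ne_zero
    have hpu : ¬ (p : ℤ) ∣ u := by
      intro hu
      have hu' : p ∣ u := by exact_mod_cast hu
      exact hp.one_lt.ne' (Nat.isUnit_iff.1 (hs p (mul_dvd_mul_left p hu')))
    rw [hc, sq] at h
    push_cast at h
    rw [mul_assoc, mul_dvd_mul_iff_left hp0] at h
    have hpc := ((Nat.prime_iff_prime_int.1 hp).dvd_or_dvd h).resolve_left hpu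
    have : p ∣ Int.gcd c ((p * u : ℕ) : ℤ) :=
      Int.dvd_gcd_iff.2 ⟨hpc, by push_cast; exact dvd_mul_right _ _⟩
    rw [h2] at this
    exact hp.one_lt.ne' (Nat.dvd_one.1 this)
  · intro h
    have hdvd : ∀ i, (s : ℤ) ∣ b i := by
      intro i
      rw [Int.natCast_dvd, ← Nat.prod_primeFactors_of_squarefree hs]
      refine Finset.prod_primes_dvd _ (fun p hp => (Nat.prime_of_mem_primeFactors hp).prime) ?_
      intro p hp
      exact Int.natCast_dvd.1
        ((h p (Nat.prime_of_mem_primeFactors hp) (Nat.dvd_of_mem_primeFactors hp)).1 i)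
    refine ⟨hdvd, ?_⟩
    by_contra hg
    obtain ⟨p, hp, hpg⟩ := Nat.exists_prime_and_dvd hg
    obtain ⟨hpc, hps⟩ := Int.dvd_gcd_iff.1 hpg
    apply (h p hp (by exact_mod_cast hps)).2
    rw [← Int.mul_ediv_cancel' (hdvd 0), sq]
    exact mul_dvd_mul hps hpc

open Classical ArithmeticFunction in
/-- Inclusion–exclusion for a single vector. When `b 0 ≠ 0`, the sum is `∑ μ(s)` over the divisors
of the product of all Eisenstein primes of `b`, a product which is at most `H`. -/
theorem sum_moebius_goodAt {k H : ℕ} (hH : 1 ≤ H) (b : Fin (k + 1) → ℤ) (hb : |b 0| ≤ H) :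
    (∑ s ∈ Finset.Icc 1 H, if GoodAt b s then moebius s else 0) =
      1 - if ∃ p : ℕ, p.Prime ∧ EisAt b p then 1 else 0 := by
  by_cases h0 : b 0 = 0
  -- If `b 0 = 0` then `p ^ 2 ∣ b 0` for every `p`, and `gcd (0, s) = s` leaves only `s = 1`.
  · rw [if_neg (by rintro ⟨p, -, -, h⟩; exact h (by simp [h0])),
      Finset.sum_eq_single_of_mem 1 (by simp [hH])]
    · simp [GoodAt]
    · intro s _ hs
      rw [if_neg]
      rintro ⟨-, h⟩
      simp [h0] at h
      exact hs h
  set P := (b 0).natAbs.primeFactors.filter (EisAt b) with hP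
  have hPmem : ∀ p, p ∈ P ↔ p.Prime ∧ EisAt b p := by
    intro p
    rw [hP, Finset.mem_filter, Nat.mem_primeFactors]
    constructor
    · rintro ⟨⟨h, -⟩, h'⟩; exact ⟨h, h'⟩
    · rintro ⟨h, h'⟩
      exact ⟨⟨h, Int.natCast_dvd.1 (h'.1 0), by simpa using h0⟩, h'⟩
  set n := ∏ p ∈ P, p with hn
  have hprime_dvd : ∀ p : ℕ, p.Prime → (p ∣ n ↔ EisAt b p) := by
    intro p hp
    constructor
    · intro h
      obtain ⟨q, hq, hpq⟩ := (hp.prime.dvd_finsetProd_iff _).1 h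
      have := (Nat.prime_dvd_prime_iff_eq hp ((hPmem q).1 hq).1).1 hpq
      exact this ▸ ((hPmem q).1 hq).2
    · intro h
      exact Finset.dvd_prod_of_mem (fun p => p) ((hPmem p).2 ⟨hp, h⟩)
  have hn0 : n ≠ 0 := Finset.prod_ne_zero_iff.2 fun p hp => ((hPmem p).1 hp).1.ne_zero
  have hnb : n ∣ (b 0).natAbs :=
    Finset.prod_primes_dvd _ (fun p hp => ((hPmem p).1 hp).1.prime)
      fun p hp => Int.natCast_dvd.1 (((hPmem p).1 hp).2.1 0)
  have hnH : n ≤ H := by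
    have := Nat.le_of_dvd (by simpa [Nat.pos_iff_ne_zero] using h0) hnb
    rw [Int.abs_eq_natAbs] at hb
    exact this.trans (by exact_mod_cast hb)
  have hgood : ∀ s, Squarefree s → (GoodAt b s ↔ s ∣ n) := by
    intro s hs
    rw [goodAt_iff_of_squarefree b hs]
    constructor
    · intro h
      rw [← Nat.prod_primeFactors_of_squarefree hs]
      refine Finset.prod_primes_dvd _ (fun p hp => (Nat.prime_of_mem_primeFactors hp).prime) ?_
      intro p hp
      have hp' := Nat.prime_of_mem_primeFactors hp
      exact (hprime_dvd p hp').2 (h p hp' (Nat.dvd_of_mem_primeFactors hp))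
    · intro h p hp hps
      exact (hprime_dvd p hp).1 (hps.trans h)
  have hsum : (∑ s ∈ Finset.Icc 1 H, if GoodAt b s then moebius s else 0) =
      ∑ s ∈ n.divisors, moebius s := by
    have : n.divisors = (Finset.Icc 1 H).filter (· ∣ n) := by
      ext s
      simp only [Nat.mem_divisors, Finset.mem_filter, Finset.mem_Icc]
      constructor
      · rintro ⟨h, -⟩
        exact ⟨⟨Nat.pos_of_dvd_of_pos h (Nat.pos_of_ne_zero hn0),
          (Nat.le_of_dvd (Nat.pos_of_ne_zero hn0) h).trans hnH⟩, h⟩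
      · rintro ⟨-, h⟩; exact ⟨h, hn0⟩
    rw [this, Finset.sum_filter]
    refine Finset.sum_congr rfl fun s _ => ?_
    -- `GoodAt` and `s ∣ n` may differ for other `s`, but there `μ` vanishes.
    by_cases hs : Squarefree s
    · simp only [hgood s hs]
    · simp [moebius_eq_zero_of_not_squarefree hs]
  rw [hsum, sum_divisors_moebius]
  have hiff : n = 1 ↔ ¬ ∃ p : ℕ, p.Prime ∧ EisAt b p := by
    rw [Nat.eq_one_iff_not_exists_prime_dvd]
    constructor
    · rintro h ⟨p, hp, hE⟩
      exact h p hp ((hprime_dvd p hp).2 hE)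
    · intro h p hp hpn
      exact h ⟨p, hp, (hprime_dvd p hp).1 hpn⟩
  by_cases h : ∃ p : ℕ, p.Prime ∧ EisAt b p
  · rw [if_neg (fun hn1 => hiff.1 hn1 h), if_pos h]; rfl
  · rw [if_pos (hiff.2 h), if_neg h]; rfl

open Classical in
theorem card_goodAt (k H s : ℕ) (hs : 0 < s) :
    ((box k H).filter (GoodAt · s)).card = (2 * (H / s) + 1) ^ k * coprimeMultiples H s := by
  have : (box k H).filter (GoodAt · s) = Fintype.piFinset (Fin.cons
      ((Finset.Icc (-(H : ℤ)) H).filter (fun x => (s : ℤ) ∣ x ∧ Int.gcd (x / s) s = 1))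
      (fun _ : Fin k => (Finset.Icc (-(H : ℤ)) H).filter (fun x => (s : ℤ) ∣ x))) := by
    ext b
    simp only [box, GoodAt, Finset.mem_filter, Fintype.mem_piFinset, Fin.forall_fin_succ,
      Fin.cons_zero, Fin.cons_succ]
    constructor
    · rintro ⟨⟨h1, h2⟩, ⟨h3, h4⟩, h5⟩
      exact ⟨⟨h1, h3, h5⟩, fun i => ⟨h2 i, h4 i⟩⟩
    · rintro ⟨⟨h1, h3, h5⟩, h⟩
      exact ⟨⟨h1, fun i => (h i).1⟩, ⟨h3, fun i => (h i).2⟩, h5⟩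
  rw [this, Fintype.card_piFinset, Fin.prod_univ_succ]
  simp only [Fin.cons_zero, Fin.cons_succ, card_multiples H s hs, Finset.prod_const,
    Finset.card_univ, Fintype.card_fin]
  rw [mul_comm, coprimeMultiples]

open Classical in
/-- Dropping the leading coefficient `1` turns the polynomials counted by `Ecount` into the vectors
of the box that are Eisenstein at some prime; `p ∤ 1` holds automatically. -/
theorem Ecount_eq (k H : ℕ) :
    Ecount (k + 1) H = ((box k H).filter fun b => ∃ p : ℕ, p.Prime ∧ EisAt b p).card := by
  rw [Ecount, ← Nat.card_eq_finsetCard]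
  refine Nat.card_congr
    { toFun := fun a => ⟨fun i => a.1 i.castSucc, ?_⟩
      invFun := fun b => ⟨Fin.snoc b.1 1, ?_⟩
      left_inv := ?_
      right_inv := ?_ }
  · obtain ⟨a, h1, h2, p, hp, h3, h4, -⟩ := a
    simp only [Finset.mem_filter, box, Fintype.mem_piFinset, Finset.mem_Icc]
    exact ⟨fun i => abs_le.1 (h2 i.castSucc i.2), p, hp, fun i => h3 i.castSucc i.2, h4⟩
  · obtain ⟨b, hb⟩ := b
    simp only [Finset.mem_filter, box, Fintype.mem_piFinset, Finset.mem_Icc] at hb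
    obtain ⟨h1, p, hp, h2, h3⟩ := hb
    have hlast : (Fin.snoc b 1 : Fin (k + 2) → ℤ) (Fin.last (k + 1)) = 1 := Fin.snoc_last _ _
    have hcs : ∀ i : Fin (k + 2), ∀ hi : i.val < k + 1,
        (Fin.snoc b 1 : Fin (k + 2) → ℤ) i = b ⟨i, hi⟩ := by
      intro i hi
      exact Fin.snoc_castSucc (α := fun _ => ℤ) (1 : ℤ) b ⟨i, hi⟩
    refine ⟨hlast, fun i hi => ?_, p, hp, fun i hi => ?_, ?_, ?_⟩
    · rw [hcs i hi]; exact abs_le.2 (h1 _)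
    · rw [hcs i hi]; exact h2 _
    · rw [hcs 0 (by simp)]; exact h3
    · rw [hlast]
      intro h
      exact hp.one_lt.ne' (by exact_mod_cast Int.eq_one_of_dvd_one (by positivity) h)
  · rintro ⟨a, h1, h⟩
    apply Subtype.ext
    funext i
    refine Fin.lastCases ?_ (fun j => ?_) i
    · simp [h1]
    · simp
  · rintro ⟨b, hb⟩
    apply Subtype.ext
    funext i
    simp

open ArithmeticFunction in
/-- The sum of `sum_moebius_goodAt` over the box. -/
theorem inclusion_exclusion (k H : ℕ) (hH : 1 ≤ H) :
    ∑ s ∈ Finset.Icc 1 H,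
        (moebius s : ℤ) * (((2 * (H / s) + 1) ^ k * coprimeMultiples H s : ℕ) : ℤ) =
      (2 * H + 1) ^ (k + 1) - (Ecount (k + 1) H : ℤ) := by
  classical
  have hcard : (box k H).card = (2 * H + 1) ^ (k + 1) := by
    simp only [box, Fintype.card_piFinset, Int.card_Icc, Finset.prod_const, Finset.card_univ,
      Fintype.card_fin]
    congr 1
    omega
  have h := Finset.sum_congr (rfl : box k H = box k H) fun b hb =>
    sum_moebius_goodAt hH b (abs_le.2 (Finset.mem_Icc.1 (Fintype.mem_piFinset.1 hb 0)))
  rw [Finset.sum_comm, Finset.sum_sub_distrib, Finset.sum_boole, ← Ecount_eq, Finset.sum_const,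
    hcard] at h
  simp only [nsmul_eq_mul, mul_one] at h
  push_cast at h
  rw [← h]
  refine Finset.sum_congr rfl fun s hs => ?_
  rw [← card_goodAt k H s (Finset.mem_Icc.1 hs).1, ← Finset.sum_filter, Finset.sum_const,
    nsmul_eq_mul, mul_comm]

/-! ### The main term as an Euler product -/

/-- The coefficients of the main term, `μ(s) φ(s) / s^(k+2)`. -/
noncomputable def mainCoeff (k s : ℕ) : ℝ :=
  (ArithmeticFunction.moebius s : ℝ) * ((Nat.totient s : ℝ) / (s : ℝ) ^ (k + 2))

/-- The series is the Dirichlet series of the convolution `ζ * ζ` at `2`. -/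
theorem summable_divisors_div_sq :
    Summable fun s : ℕ => (s.divisors.card : ℝ) / (s : ℝ) ^ 2 := by
  have h2 : LSeriesSummable (fun n => (ArithmeticFunction.zeta n : ℂ)) 2 :=
    ArithmeticFunction.LSeriesSummable_zeta_iff.2 (by norm_num)
  have h := (h2.convolution h2).norm
  refine h.congr fun s => ?_
  rcases eq_or_ne s 0 with rfl | hs
  · simp
  rw [LSeries.term_of_ne_zero hs, norm_div, LSeries.convolution_def]
  have : ∑ p ∈ s.divisorsAntidiagonal, (ArithmeticFunction.zeta p.1 : ℂ) *
      (ArithmeticFunction.zeta p.2 : ℂ) = (s.divisors.card : ℂ) := by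
    rw [← Nat.map_div_right_divisors, Finset.sum_map, Finset.card_eq_sum_ones, Nat.cast_sum]
    refine Finset.sum_congr rfl fun t ht => ?_
    have ht0 := Nat.pos_of_mem_divisors ht
    have ht1 : s / t ≠ 0 := (Nat.div_pos (Nat.divisor_le ht) ht0).ne'
    change (ArithmeticFunction.zeta t : ℂ) * (ArithmeticFunction.zeta (s / t) : ℂ) = ((1 : ℕ) : ℂ)
    rw [ArithmeticFunction.zeta_apply_ne ht0.ne', ArithmeticFunction.zeta_apply_ne ht1]
    simp
  simp only [this]
  norm_num

theorem one_le_card_divisors {s : ℕ} (hs : 0 < s) : (1 : ℝ) ≤ s.divisors.card := by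
  exact_mod_cast Finset.card_pos.2 (Nat.nonempty_divisors.2 hs.ne')

theorem abs_mainCoeff_le_div_pow (k s : ℕ) (hs : 0 < s) :
    |mainCoeff k s| ≤ 1 / (s : ℝ) ^ (k + 1) := by
  have hs' : (0 : ℝ) < s := by exact_mod_cast hs
  have h1 : (Nat.totient s : ℝ) / (s : ℝ) ^ (k + 2) ≤ 1 / (s : ℝ) ^ (k + 1) := by
    rw [div_le_div_iff₀ (by positivity) (by positivity), pow_succ (s : ℝ) (k + 1)]
    have : (Nat.totient s : ℝ) ≤ s := by exact_mod_cast Nat.totient_le s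
    nlinarith [pow_pos hs' (k + 1)]
  rw [mainCoeff, abs_mul, abs_of_nonneg (a := (Nat.totient s : ℝ) / _) (by positivity)]
  exact (mul_le_of_le_one_left (by positivity) (abs_moebius_real_le s)).trans h1

theorem abs_mainCoeff_le (k s : ℕ) (hk : 1 ≤ k) :
    |mainCoeff k s| ≤ (s.divisors.card : ℝ) / (s : ℝ) ^ 2 := by
  rcases Nat.eq_zero_or_pos s with rfl | hs
  · simp [mainCoeff]
  have hs' : (1 : ℝ) ≤ s := by exact_mod_cast hs
  refine (abs_mainCoeff_le_div_pow k s hs).trans ?_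
  exact div_le_div₀ (by positivity) (one_le_card_divisors hs) (by positivity)
    (pow_le_pow_right₀ hs' (by omega))

theorem tsum_mainCoeff (k : ℕ) (hk : 1 ≤ k) :
    ∑' s, mainCoeff k s = 1 - theta (k + 1) := by
  have hsum : Summable fun s => ‖mainCoeff k s‖ :=
    Summable.of_nonneg_of_le (fun _ => norm_nonneg _) (fun s => abs_mainCoeff_le k s hk)
      summable_divisors_div_sq
  rw [← EulerProduct.eulerProduct_tprod (f := mainCoeff k) (by simp [mainCoeff]) ?_ hsum
    (by simp [mainCoeff]), theta, sub_sub_cancel]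
  · refine tprod_congr fun p => ?_
    have hp := p.2
    rw [tsum_eq_sum (s := Finset.range 2)]
    · simp only [Finset.sum_range_succ, Finset.sum_range_zero, pow_zero, pow_one, mainCoeff,
        ArithmeticFunction.moebius_apply_prime hp, Nat.totient_prime hp]
      rw [Nat.cast_sub hp.one_le]
      simp
      ring
    · intro e he
      have he2 : 2 ≤ e := not_lt.1 fun h => he (Finset.mem_range.2 h)
      rw [mainCoeff, ArithmeticFunction.moebius_apply_prime_pow hp (by omega),
        if_neg (by omega)]
      simp
  · intro m n hmn
    simp only [mainCoeff, Nat.totient_mul hmn,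
      ArithmeticFunction.isMultiplicative_moebius.map_mul_of_coprime hmn]
    push_cast
    rw [mul_pow]
    ring

/-! ### Error terms -/

/-- The number of vectors good at `s ≤ H`, compared with its main term. With `X = H / s ≥ 1`, both
factors of the count differ from `2X` and `2X φ(s)/s` by at most `1` and `τ(s)`. -/
theorem term_bound (k H s : ℕ) (hk : 2 ≤ k) (hs : 0 < s) (hsH : s ≤ H) :
    |(((2 * (H / s) + 1) ^ k * coprimeMultiples H s : ℕ) : ℝ) -
        (2 * (H : ℝ)) ^ (k + 1) * ((Nat.totient s : ℝ) / (s : ℝ) ^ (k + 2))| ≤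
      ((k + 1) * 3 ^ k * (H : ℝ) ^ k) * ((s.divisors.card : ℝ) / (s : ℝ) ^ 2) := by
  have hs' : (1 : ℝ) ≤ s := by exact_mod_cast hs
  have hs0 : (0 : ℝ) < s := by linarith
  set X : ℝ := (H : ℝ) / s with hX
  set τ : ℝ := (s.divisors.card : ℝ)
  set A : ℝ := ((2 * (H / s) + 1 : ℕ) : ℝ) with hA
  set K : ℝ := (coprimeMultiples H s : ℝ)
  set q : ℝ := (Nat.totient s : ℝ) / s with hq
  have hX1 : 1 ≤ X := by
    rw [hX, le_div_iff₀ hs0, one_mul]; exact_mod_cast hsH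
  have hτ : 1 ≤ τ := one_le_card_divisors hs
  have hAX : |A - 2 * X| ≤ 1 := by
    have := abs_multiples_sub_le H s hs
    rwa [mul_div_assoc] at this
  have hA0 : 0 ≤ A := Nat.cast_nonneg _
  have hA3 : A ≤ 3 * X := by linarith [(abs_le.1 hAX).2]
  have hK0 : 0 ≤ K := Nat.cast_nonneg _
  have hK3 : K ≤ 3 * X := by
    refine le_trans ?_ hA3
    rw [hA, ← card_multiples H s hs]
    have hsub := Finset.card_le_card (Finset.monotone_filter_right
      (Finset.Icc (-(H : ℤ)) H) (p := fun x => (s : ℤ) ∣ x ∧ Int.gcd (x / s) s = 1)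
      (q := fun x => (s : ℤ) ∣ x) fun x _ hx => hx.1)
    exact Nat.cast_le.2 hsub
  have hKq : |K - 2 * X * q| ≤ τ := abs_coprimeMultiples_sub_le H s hs
  have hpow : |A ^ k - (2 * X) ^ k| ≤ k * (3 * X) ^ (k - 1) := by
    refine (abs_pow_sub_pow_le A (2 * X) k).trans ?_
    have hm : max |A| |2 * X| ≤ 3 * X := by
      rw [abs_of_nonneg hA0, abs_of_nonneg (by linarith)]
      exact max_le hA3 (by linarith)
    have hm0 : (0 : ℝ) ≤ max |A| |2 * X| := le_max_of_le_left (abs_nonneg _)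
    have := pow_le_pow_left₀ hm0 hm (k - 1)
    have hk0 : (0 : ℝ) ≤ k := Nat.cast_nonneg _
    calc |A - 2 * X| * k * max |A| |2 * X| ^ (k - 1)
        ≤ 1 * k * (3 * X) ^ (k - 1) := by gcongr
      _ = _ := by ring
  have hmain : (2 * (H : ℝ)) ^ (k + 1) * ((Nat.totient s : ℝ) / (s : ℝ) ^ (k + 2)) =
      (2 * X) ^ k * (2 * X * q) := by
    rw [hX, hq, mul_pow, mul_pow, div_pow]
    field_simp
    ring
  have hsplit : A ^ k * K - (2 * X) ^ k * (2 * X * q) =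
      (A ^ k - (2 * X) ^ k) * K + (2 * X) ^ k * (K - 2 * X * q) := by ring
  have hXk : X ^ k ≤ (H : ℝ) ^ k * (1 / (s : ℝ) ^ 2) := by
    rw [hX, div_pow, div_eq_mul_one_div]
    gcongr
  rw [hmain]
  push_cast [← hA]
  calc |A ^ k * K - (2 * X) ^ k * (2 * X * q)|
      ≤ |A ^ k - (2 * X) ^ k| * |K| + |(2 * X) ^ k| * |K - 2 * X * q| := by
        rw [hsplit, ← abs_mul, ← abs_mul]; exact abs_add_le _ _
    _ ≤ (k * (3 * X) ^ (k - 1)) * (3 * X) + (3 * X) ^ k * τ := by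
        rw [abs_of_nonneg hK0, abs_of_nonneg (a := (2 * X) ^ k) (by positivity)]
        gcongr
        norm_num
    _ = k * (3 * X) ^ k + (3 * X) ^ k * τ := by
        rw [mul_assoc, pow_sub_one_mul (by omega)]
    _ ≤ k * (3 * X) ^ k * τ + (3 * X) ^ k * τ := by
        exact add_le_add_left (le_mul_of_one_le_right (by positivity) hτ) _
    _ = (k + 1) * 3 ^ k * τ * X ^ k := by rw [mul_pow]; ring
    _ ≤ (k + 1) * 3 ^ k * τ * ((H : ℝ) ^ k * (1 / (s : ℝ) ^ 2)) := by gcongr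
    _ = _ := by ring

/-- For `s > H` there is nothing to count (`inclusion_exclusion` stops at `H`), and the main term
is itself within the error because `H ^ (k+1) / s ^ (k+1) ≤ H ^ k / s ^ k`. -/
theorem tail_bound (k H s : ℕ) (hk : 2 ≤ k) (hsH : H < s) :
    |(2 * (H : ℝ)) ^ (k + 1) * mainCoeff k s| ≤
      (2 ^ (k + 1) * (H : ℝ) ^ k) * ((s.divisors.card : ℝ) / (s : ℝ) ^ 2) := by
  have hs : 0 < s := by omega
  have hs' : (1 : ℝ) ≤ s := by exact_mod_cast hs
  have hH : (H : ℝ) ≤ s := by exact_mod_cast hsH.le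
  rw [abs_mul, abs_of_nonneg (a := (2 * (H : ℝ)) ^ (k + 1)) (by positivity)]
  calc (2 * (H : ℝ)) ^ (k + 1) * |mainCoeff k s|
      ≤ (2 * (H : ℝ)) ^ (k + 1) * (1 / (s : ℝ) ^ (k + 1)) := by
        gcongr; exact abs_mainCoeff_le_div_pow k s hs
    _ = 2 ^ (k + 1) * (H : ℝ) ^ k * (H * (1 / (s : ℝ) ^ (k + 1))) := by rw [mul_pow]; ring
    _ ≤ 2 ^ (k + 1) * (H : ℝ) ^ k * (s * (1 / (s : ℝ) ^ (k + 1))) := by gcongr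
    _ = 2 ^ (k + 1) * (H : ℝ) ^ k * (1 / (s : ℝ) ^ k) := by
        rw [pow_succ (s : ℝ)]; field_simp
    _ ≤ _ := by
        gcongr
        exact one_le_card_divisors hs

theorem eisenstein_monic_count_asymptotic (d : ℕ) (hd : 2 < d) :
    ∃ C : ℝ, ∀ H : ℕ, 1 ≤ H →
      |(Ecount d H : ℝ) - theta d * 2 ^ d * (H : ℝ) ^ d| ≤ C * (H : ℝ) ^ (d - 1) := by
  obtain ⟨k, rfl⟩ : ∃ k, d = k + 1 := ⟨d - 1, by omega⟩
  have hk : 2 ≤ k := by omega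
  set g : ℕ → ℝ := fun s => (s.divisors.card : ℝ) / (s : ℝ) ^ 2 with hg
  set c : ℝ := (k + 1) * 3 ^ k + 2 ^ (k + 1) with hc
  refine ⟨(k + 1) * 3 ^ k + c * ∑' s, g s, fun H hH => ?_⟩
  have hH1 : (1 : ℝ) ≤ H := by exact_mod_cast hH
  set N : ℕ → ℝ := fun s => if s ∈ Finset.Icc 1 H then
    (ArithmeticFunction.moebius s : ℝ) * (((2 * (H / s) + 1) ^ k * coprimeMultiples H s : ℕ) : ℝ)
    else 0 with hN
  have hNsum : HasSum N ((2 * H + 1) ^ (k + 1) - (Ecount (k + 1) H : ℝ)) := by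
    have h1 : HasSum N (∑ s ∈ Finset.Icc 1 H, N s) :=
      hasSum_sum_of_ne_finset_zero fun s hs => if_neg hs
    convert h1 using 1
    have h := congrArg (Int.cast : ℤ → ℝ) (inclusion_exclusion k H hH)
    simp only [Int.cast_sum, Int.cast_mul, Int.cast_natCast, Int.cast_sub, Int.cast_pow,
      Int.cast_add, Int.cast_ofNat, Int.cast_one] at h
    rw [← h]
    exact Finset.sum_congr rfl fun s hs => (if_pos hs).symm
  have hMsum : HasSum (fun s => (2 * (H : ℝ)) ^ (k + 1) * mainCoeff k s)
      ((2 * (H : ℝ)) ^ (k + 1) * (1 - theta (k + 1))) := by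
    rw [← tsum_mainCoeff k (by omega)]
    refine HasSum.mul_left _ (Summable.hasSum (Summable.of_norm_bounded
      summable_divisors_div_sq fun s => abs_mainCoeff_le k s (by omega)))
  have hdiff := hNsum.sub hMsum
  have hbound : ∀ s, ‖N s - (2 * (H : ℝ)) ^ (k + 1) * mainCoeff k s‖ ≤ c * (H : ℝ) ^ k * g s := by
    intro s
    have hg0 : 0 ≤ g s := by positivity
    rw [Real.norm_eq_abs]
    by_cases hs : s ∈ Finset.Icc 1 H
    · simp only [hN, if_pos hs]
      obtain ⟨h1, h2⟩ := Finset.mem_Icc.1 hs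
      rw [mainCoeff, mul_left_comm, ← mul_sub, abs_mul]
      refine (mul_le_of_le_one_left (abs_nonneg _) (abs_moebius_real_le s)).trans ?_
      refine (term_bound k H s hk h1 h2).trans ?_
      rw [hc]
      gcongr
      exact le_add_of_nonneg_right (by positivity)
    · simp only [hN, if_neg hs, zero_sub, abs_neg]
      rcases Nat.eq_zero_or_pos s with rfl | h0
      · simp [mainCoeff, hg]
      · have hsH : H < s := by
          by_contra hcon
          exact hs (Finset.mem_Icc.2 ⟨h0, by omega⟩)
        refine (tail_bound k H s hk hsH).trans ?_
        rw [hc]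
        gcongr
        exact le_add_of_nonneg_left (by positivity)
  have herr := tsum_of_norm_bounded
    (summable_divisors_div_sq.hasSum.mul_left (c * (H : ℝ) ^ k)) hbound
  rw [hdiff.tsum_eq, Real.norm_eq_abs] at herr
  have hbox : |(2 * (H : ℝ) + 1) ^ (k + 1) - (2 * H) ^ (k + 1)| ≤
      (k + 1) * 3 ^ k * (H : ℝ) ^ k := by
    refine (abs_pow_sub_pow_le _ _ _).trans ?_
    rw [add_sub_cancel_left, abs_one, abs_of_nonneg (by positivity), abs_of_nonneg (by positivity),
      max_eq_left (by linarith), Nat.add_sub_cancel, one_mul, mul_assoc, ← mul_pow]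
    push_cast
    gcongr
    linarith
  have e : (Ecount (k + 1) H : ℝ) - theta (k + 1) * 2 ^ (k + 1) * (H : ℝ) ^ (k + 1) =
      ((2 * (H : ℝ) + 1) ^ (k + 1) - (2 * H) ^ (k + 1)) -
      ((2 * (H : ℝ) + 1) ^ (k + 1) - (Ecount (k + 1) H : ℝ) -
        (2 * (H : ℝ)) ^ (k + 1) * (1 - theta (k + 1))) := by
    rw [mul_pow]; ring
  rw [e, Nat.add_sub_cancel]
  refine (abs_sub _ _).trans ?_
  calc _ ≤ (k + 1) * 3 ^ k * (H : ℝ) ^ k + c * (H : ℝ) ^ k * ∑' s, g s := add_le_add hbox herr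
    _ = _ := by ring
end

section
/- There exists a constant C such that for all integers H ≥ 2, |E_2(H) − θ_2 · 4 · H²| ≤ C · H · (log H)². -/
/-!
Write a monic quadratic as `X² + b X + a`. It is Eisenstein at some prime iff the product `g` of the
primes `p` with `p ∣ a`, `p ∣ b`, `p² ∤ a` is not `1`, so for `a ≠ 0` its indicator is
`1 - ∑_{s ∣ g} μ(s)`, and for squarefree `s` the condition `s ∣ g` says `s ∣ a`, `s ∣ b` and
`gcd(a / s, s) = 1` (`indicator_eisensteinAt`). Summing over all `|a|, |b| ≤ H`
with `a ≠ 0` gives (`Ecount_two_eq`)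

`E₂(H) = 2 H (2 H + 1) - 2 ∑_{s ≤ H} μ(s) (2 ⌊H/s⌋ + 1) #{k ≤ H/s : gcd(k, s) = 1}`.

The coprime count equals `H φ(s) / s² + O(d(s))` (`abs_coprimeCount_sub_le`), where `d(s)` is the
number of divisors of `s`. Hence each term is `2 H² μ(s) φ(s) / s³ + O(H d(s) / s)`
(`abs_term_sub_le`), and the errors add up to `O(H log² H)` since
`∑_{s ≤ H} d(s) / s ≤ (∑_{a ≤ H} 1 / a)²` (`sum_card_divisors_div_le`). Completing the main sum to
an infinite series costs `O(H)` (`abs_tsum_mainTerm_sub_le`), and the Euler product identifies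
`∑ μ(s) φ(s) / s³` with `1 - θ₂` (`theta2_eq`).
-/

/-- `θ_2 = 1 - ∏_p (1 - (p-1)/p^3)`, product over all primes. -/
noncomputable def theta2 : ℝ :=
  1 - ∏' p : Nat.Primes, (1 - (((p : ℕ) : ℝ) - 1) / ((p : ℕ) : ℝ) ^ 3)

open Finset ArithmeticFunction
open scoped ArithmeticFunction.Moebius

/-! ### The Euler product for `1 - θ₂` -/

/-- The `s`-th term `μ(s) φ(s) / s³` of the Dirichlet series whose Euler product is `1 - θ₂`; the
value at `s = 0` is `0`. -/
noncomputable def mainTerm (s : ℕ) : ℝ := (μ s : ℝ) * (s.totient : ℝ) / (s : ℝ) ^ 3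

lemma abs_mainTerm_le (s : ℕ) : |mainTerm s| ≤ ((s : ℝ) ^ 2)⁻¹ := by
  rcases Nat.eq_zero_or_pos s with rfl | hs
  · simp [mainTerm]
  have hs' : (0 : ℝ) < s := by exact_mod_cast hs
  have h1 : |(μ s : ℝ)| ≤ 1 := by exact_mod_cast abs_moebius_le_one
  have h2 : (s.totient : ℝ) ≤ s := by exact_mod_cast Nat.totient_le s
  rw [mainTerm, abs_div, abs_mul, Nat.abs_cast, abs_of_pos (pow_pos hs' 3)]
  calc |(μ s : ℝ)| * s.totient / (s : ℝ) ^ 3 ≤ 1 * s / (s : ℝ) ^ 3 := by gcongr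
    _ = _ := by field_simp

lemma summable_inv_sq : Summable fun s : ℕ => ((s : ℝ) ^ 2)⁻¹ :=
  Real.summable_nat_pow_inv.2 (by norm_num)

lemma summable_mainTerm : Summable mainTerm :=
  Summable.of_norm_bounded summable_inv_sq abs_mainTerm_le

/-- The Euler product of `∑ μ(s) φ(s) / s³`. -/
lemma theta2_eq : theta2 = 1 - ∑' s, mainTerm s := by
  have key := EulerProduct.eulerProduct_hasProd (f := mainTerm) (by simp [mainTerm])
    (by
      intro m n hmn
      simp only [mainTerm, isMultiplicative_moebius.map_mul_of_coprime hmn,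
        Nat.totient_mul hmn]
      push_cast
      ring)
    summable_mainTerm.norm (by simp [mainTerm])
  rw [theta2, ← key.tprod_eq]
  congr 1
  refine tprod_congr fun p => ?_
  have hp := p.2
  rw [tsum_eq_sum (s := range 2)]
  · simp [sum_range_succ, mainTerm, moebius_apply_prime hp, Nat.totient_prime hp,
      Nat.cast_sub hp.one_le]
    ring
  · intro e he
    have he' : 2 ≤ e := by simp at he; lia
    rw [mainTerm, moebius_apply_prime_pow hp (by lia), if_neg (by lia)]
    simp

lemma abs_tsum_mainTerm_sub_le {H : ℕ} (hH : 1 ≤ H) :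
    |∑' s, mainTerm s - ∑ s ∈ Ioc 0 H, mainTerm s| ≤ (H : ℝ)⁻¹ := by
  have hr : ∑ s ∈ Ioc 0 H, mainTerm s = ∑ s ∈ range (H + 1), mainTerm s := by
    refine sum_subset (fun x hx => by simp at *; lia) fun x hx hx' => ?_
    have : x = 0 := by simp at *; lia
    simp [this, mainTerm]
  have hle : ∀ n ≥ H + 1, |∑ s ∈ range n, mainTerm s - ∑ s ∈ Ioc 0 H, mainTerm s| ≤ (H : ℝ)⁻¹ := by
    intro n hn
    rw [hr, ← sum_Ico_eq_sub _ hn]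
    calc |∑ s ∈ Ico (H + 1) n, mainTerm s| ≤ ∑ s ∈ Ico (H + 1) n, ((s : ℝ) ^ 2)⁻¹ :=
          (abs_sum_le_sum_abs _ _).trans (sum_le_sum fun s _ => abs_mainTerm_le s)
      _ ≤ ∑ s ∈ Ioc H n, ((s : ℝ) ^ 2)⁻¹ :=
          sum_le_sum_of_subset_of_nonneg (fun x hx => by simp at *; lia) fun _ _ _ => by positivity
      _ ≤ (H : ℝ)⁻¹ - (n : ℝ)⁻¹ := sum_Ioc_inv_sq_le_sub (by lia) (by lia)
      _ ≤ _ := by simp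
  have ht := ((summable_mainTerm.hasSum.tendsto_sum_nat).sub_const
    (∑ s ∈ Ioc 0 H, mainTerm s)).abs
  exact le_of_tendsto ht (Filter.eventually_atTop.2 ⟨H + 1, hle⟩)

/-! ### Divisor sums and coprime counts -/

/-- Expanding `(∑_{a ≤ H} 1/a)²` over pairs `(a, b)` and keeping only those with `s = a b ≤ H`
gives the left-hand side; this is the source of the factor `log² H`. -/
lemma sum_card_divisors_div_le {H : ℕ} :
    ∑ s ∈ Ioc 0 H, (#s.divisors : ℝ) / s ≤ (1 + Real.log H) ^ 2 := by
  have hh : ∑ a ∈ Ioc 0 H, (a : ℝ)⁻¹ ≤ 1 + Real.log H := by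
    have := harmonic_le_one_add_log H
    rw [harmonic_eq_sum_Icc] at this
    push_cast at this
    exact this
  have hs : ∀ s ∈ Ioc 0 H, (#s.divisors : ℝ) / s =
      ∑ x ∈ Ioc 0 H ×ˢ Ioc 0 H with x.1 * x.2 = s, (x.1 : ℝ)⁻¹ * (x.2 : ℝ)⁻¹ := by
    intro s hs
    simp only [mem_Ioc] at hs
    have hset : {x ∈ Ioc 0 H ×ˢ Ioc 0 H | x.1 * x.2 = s} = s.divisorsAntidiagonal := by
      ext ⟨a, b⟩
      simp only [mem_filter, mem_product, mem_Ioc, Nat.mem_divisorsAntidiagonal]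
      constructor
      · rintro ⟨-, rfl⟩; exact ⟨rfl, by lia⟩
      · rintro ⟨rfl, -⟩
        have ha := Nat.pos_of_mul_pos_right hs.1
        have hb := Nat.pos_of_mul_pos_left hs.1
        exact ⟨⟨⟨by assumption, by nlinarith⟩, by assumption, by nlinarith⟩, rfl⟩
    rw [hset, sum_congr rfl (g := fun _ => (s : ℝ)⁻¹), sum_const, nsmul_eq_mul, div_eq_mul_inv,
      ← Nat.map_div_right_divisors, card_map]
    intro x hx
    rw [← mul_inv, ← Nat.cast_mul, (Nat.mem_divisorsAntidiagonal.1 hx).1]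
  rw [sum_congr rfl hs]
  calc _ ≤ ∑ x ∈ Ioc 0 H ×ˢ Ioc 0 H, (x.1 : ℝ)⁻¹ * (x.2 : ℝ)⁻¹ :=
        sum_fiberwise_le_sum_of_sum_fiber_nonneg fun _ _ => sum_nonneg fun _ _ => by positivity
    _ = (∑ a ∈ Ioc 0 H, (a : ℝ)⁻¹) ^ 2 := by rw [sq, sum_mul_sum, sum_product]
    _ ≤ _ := by gcongr

lemma sum_moebius_divisors {n : ℕ} : ∑ d ∈ n.divisors, μ d = if n = 1 then 1 else 0 := by
  rw [← coe_mul_zeta_apply, moebius_mul_coe_zeta, one_apply]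

lemma sum_moebius_div {s : ℕ} (hs : 0 < s) :
    ∑ d ∈ s.divisors, (μ d : ℝ) / d = (s.totient : ℝ) / s := by
  have h := (sum_eq_iff_sum_mul_moebius_eq (R := ℝ) (f := fun n => (n.totient : ℝ))
    (g := fun n => (n : ℝ))).1 (fun n _ => by exact_mod_cast Nat.sum_totient n) s hs
  rw [Nat.sum_divisorsAntidiagonal (fun a b => (μ a : ℝ) * (b : ℝ))] at h
  rw [← h, sum_div]
  refine sum_congr rfl fun d hd => ?_
  have hd' := Nat.dvd_of_mem_divisors hd
  have : (d : ℝ) ≠ 0 := by have := Nat.pos_of_dvd_of_pos hd' hs; positivity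
  have : (s : ℝ) ≠ 0 := by positivity
  rw [Nat.cast_div hd' (by assumption)]
  field_simp

lemma abs_natDiv_sub_le (a b : ℕ) : |((a / b : ℕ) : ℝ) - (a : ℝ) / b| ≤ 1 := by
  have h1 : ((a / b : ℕ) : ℝ) ≤ (a : ℝ) / b := Nat.cast_div_le
  have h2 : (a : ℝ) / b < ((a / b : ℕ) : ℝ) + 1 := by
    rw [← Nat.floor_div_eq_div (K := ℝ)]; exact Nat.lt_floor_add_one _
  rw [abs_le]; constructor <;> linarith

/-- The number of integers `1 ≤ k ≤ H / s` coprime to `s`. -/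
def coprimeCount (H s : ℕ) : ℕ := #{k ∈ Ioc 0 (H / s) | k.Coprime s}

lemma coprimeCount_eq (H : ℕ) {s : ℕ} (hs : 0 < s) :
    (coprimeCount H s : ℤ) = ∑ d ∈ s.divisors, μ d * ((H / (s * d) : ℕ) : ℤ) := by
  have h1 : ∀ k ∈ Ioc 0 (H / s), (if k.Coprime s then (1 : ℤ) else 0) =
      ∑ d ∈ s.divisors, if d ∣ k then μ d else 0 := by
    intro k hk
    simp only [Nat.coprime_iff_gcd_eq_one]
    rw [← sum_moebius_divisors, ← sum_filter]
    refine sum_congr ?_ fun _ _ => rfl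
    ext d
    simp only [Nat.mem_divisors, mem_filter, Nat.dvd_gcd_iff]
    have : k.gcd s ≠ 0 := (Nat.gcd_pos_of_pos_right _ hs).ne'
    have : s ≠ 0 := hs.ne'
    tauto
  rw [coprimeCount, card_filter, Nat.cast_sum]
  simp only [Nat.cast_ite, Nat.cast_one, Nat.cast_zero]
  rw [sum_congr rfl h1, sum_comm]
  refine sum_congr rfl fun d _ => ?_
  rw [← sum_filter, sum_const, Nat.Ioc_filter_dvd_card_eq_div, Nat.div_div_eq_div_mul,
    nsmul_eq_mul, mul_comm]

lemma abs_coprimeCount_sub_le (H : ℕ) {s : ℕ} (hs : 0 < s) :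
    |(coprimeCount H s : ℝ) - H * s.totient / (s : ℝ) ^ 2| ≤ #s.divisors := by
  have h1 : (coprimeCount H s : ℝ) = ∑ d ∈ s.divisors, (μ d : ℝ) * ((H / (s * d) : ℕ) : ℝ) := by
    simpa only [Int.cast_sum, Int.cast_mul, Int.cast_natCast] using
      congrArg (Int.cast : ℤ → ℝ) (coprimeCount_eq H hs)
  have h2 : (H * s.totient / (s : ℝ) ^ 2 : ℝ) =
      ∑ d ∈ s.divisors, (μ d : ℝ) * ((H : ℝ) / ((s * d : ℕ) : ℝ)) := by
    have : (H * s.totient / (s : ℝ) ^ 2 : ℝ) = H / s * (s.totient / s) := by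
      field_simp
    rw [this, ← sum_moebius_div hs, mul_sum]
    refine sum_congr rfl fun d _ => ?_
    push_cast
    rw [div_mul_div_comm, mul_div_assoc']
    ring
  rw [h1, h2, ← sum_sub_distrib]
  refine (abs_sum_le_sum_abs _ _).trans ?_
  rw [card_eq_sum_ones, Nat.cast_sum, Nat.cast_one]
  refine sum_le_sum fun d _ => ?_
  rw [← mul_sub, abs_mul]
  have h1 : |(μ d : ℝ)| ≤ 1 := by exact_mod_cast abs_moebius_le_one
  exact mul_le_one₀ h1 (abs_nonneg _) (abs_natDiv_sub_le _ _)

lemma abs_term_sub_le (H : ℕ) {s : ℕ} (hs : 0 < s) :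
    |(μ s : ℝ) * ((1 + 2 * ((H / s : ℕ) : ℝ)) * (coprimeCount H s : ℝ)) -
      2 * (H : ℝ) ^ 2 * mainTerm s| ≤ 3 * (H : ℝ) * ((#s.divisors : ℝ) / s) := by
  have hs' : (0 : ℝ) < s := by exact_mod_cast hs
  have hμ : |(μ s : ℝ)| ≤ 1 := by exact_mod_cast abs_moebius_le_one
  have hd : (1 : ℝ) ≤ #s.divisors := by
    exact_mod_cast card_pos.2 ⟨1, Nat.one_mem_divisors.2 hs.ne'⟩
  have hc := abs_coprimeCount_sub_le H hs
  have hq : |((1 : ℝ) + 2 * ((H / s : ℕ) : ℝ)) - 2 * (H / s)| ≤ 1 := by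
    have h1 : ((H / s : ℕ) : ℝ) ≤ (H : ℝ) / s := Nat.cast_div_le
    have h2 : (H : ℝ) / s < ((H / s : ℕ) : ℝ) + 1 := by
      rw [← Nat.floor_div_eq_div (K := ℝ)]; exact Nat.lt_floor_add_one _
    rw [abs_le]; constructor <;> linarith
  have hcle : (coprimeCount H s : ℝ) ≤ (H : ℝ) / s := by
    refine le_trans ?_ (Nat.cast_div_le (m := H) (n := s))
    exact_mod_cast (card_filter_le _ _).trans (by simp)
  have e : (μ s : ℝ) * ((1 + 2 * ((H / s : ℕ) : ℝ)) * coprimeCount H s) - 2 * (H : ℝ) ^ 2 * mainTerm s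
      = μ s * ((((1 : ℝ) + 2 * ((H / s : ℕ) : ℝ)) - 2 * (H / s)) * coprimeCount H s +
        2 * (H / s) * ((coprimeCount H s : ℝ) - H * s.totient / (s : ℝ) ^ 2)) := by
    rw [mainTerm]; field_simp; ring
  rw [e, abs_mul]
  calc _ ≤ 1 * (1 * ((H : ℝ) / s) + 2 * (H / s) * #s.divisors) := by
        gcongr
        refine (abs_add_le _ _).trans ?_
        rw [abs_mul, abs_mul, Nat.abs_cast, abs_of_nonneg (by positivity : 0 ≤ 2 * ((H : ℝ) / s))]
        gcongr
    _ ≤ 1 * (((H : ℝ) / s) * #s.divisors + 2 * (H / s) * #s.divisors) := by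
        rw [one_mul ((H : ℝ) / s)]
        gcongr
        exact le_mul_of_one_le_right (by positivity) hd
    _ = _ := by ring

/-! ### Inclusion–exclusion -/

/-- For natural numbers `m`, `n`, the polynomial `X² + n X + m` satisfies the Eisenstein condition
at some prime. -/
def EisensteinAt (m n : ℕ) : Prop := ∃ p : ℕ, p.Prime ∧ p ∣ m ∧ p ∣ n ∧ ¬ p ^ 2 ∣ m

open Classical in
/-- Inclusion–exclusion over primes, as a Möbius sum. The `s` with nonzero summand are exactly the
divisors of the product `g` of the primes at which the Eisenstein condition holds, and
`∑_{s ∣ g} μ(s)` vanishes unless `g = 1`. -/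
lemma indicator_eisensteinAt {H m : ℕ} (hm : 0 < m) (hmH : m ≤ H) (n : ℕ) :
    (if EisensteinAt m n then (1 : ℤ) else 0) =
      1 - ∑ s ∈ Ioc 0 H, if s ∣ n then (if s ∣ m ∧ (m / s).Coprime s then μ s else 0) else 0 := by
  -- `P` is the set of primes at which the Eisenstein condition holds.
  set P : Finset ℕ := {p ∈ m.primeFactors | p ∣ n ∧ ¬ p ^ 2 ∣ m} with hP
  have hprime : ∀ p ∈ P, p.Prime := fun p hp =>
    Nat.prime_of_mem_primeFactors (mem_filter.1 hp).1
  set g : ℕ := ∏ p ∈ P, p with hg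
  have hg0 : g ≠ 0 := prod_ne_zero_iff.2 fun p hp => (hprime p hp).ne_zero
  have hgP : g.primeFactors = P := Nat.primeFactors_prod hprime
  have hgsq : Squarefree g := by
    rw [hg]
    refine Finset.squarefree_prod_of_pairwise_isCoprime ?_ fun p hp => (hprime p hp).squarefree
    intro p hp q hq hpq
    exact Nat.coprime_iff_isRelPrime.1 ((Nat.coprime_primes (hprime p hp) (hprime q hq)).2 hpq)
  have hg1 : g = 1 ↔ ¬ EisensteinAt m n := by
    rw [← not_iff_not, not_not]
    constructor
    · intro h
      obtain ⟨p, hp, hpg⟩ := Nat.exists_prime_and_dvd h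
      have : p ∈ P := hgP ▸ Nat.mem_primeFactors.2 ⟨hp, hpg, hg0⟩
      obtain ⟨h1, h2, h3⟩ := mem_filter.1 this
      exact ⟨p, hp, Nat.dvd_of_mem_primeFactors h1, h2, h3⟩
    · rintro ⟨p, hp, h1, h2, h3⟩ h
      have : p ∈ P := mem_filter.2 ⟨Nat.mem_primeFactors.2 ⟨hp, h1, hm.ne'⟩, h2, h3⟩
      rw [← hgP, h] at this
      simp at this
  have hdvd : ∀ s, Squarefree s → (s ∣ g ↔ s ∣ n ∧ s ∣ m ∧ (m / s).Coprime s) := by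
    intro s hs
    have hsub : s ∣ g ↔ ∀ p, p.Prime → p ∣ s → p ∈ P := by
      rw [← hgP]
      constructor
      · intro h p hp hps
        exact Nat.mem_primeFactors.2 ⟨hp, hps.trans h, hg0⟩
      · intro h
        rw [← Nat.prod_primeFactors_of_squarefree hs]
        refine (prod_dvd_prod_of_subset _ _ _ fun p hp => h p ?_ ?_).trans
          (Nat.prod_primeFactors_dvd g)
        · exact Nat.prime_of_mem_primeFactors hp
        · exact Nat.dvd_of_mem_primeFactors hp
    have hsq : ∀ k, s ∣ k ↔ ∀ p, p.Prime → p ∣ s → p ∣ k := by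
      intro k
      constructor
      · exact fun h p _ hps => hps.trans h
      · intro h
        rw [← Nat.prod_primeFactors_of_squarefree hs]
        exact prod_primes_dvd _ (fun p hp => (Nat.prime_of_mem_primeFactors hp).prime)
          fun p hp => h p (Nat.prime_of_mem_primeFactors hp) (Nat.dvd_of_mem_primeFactors hp)
    rw [hsub]
    have hs0 : 0 < s := Nat.pos_of_ne_zero hs.ne_zero
    constructor
    · intro h
      have hsm : s ∣ m := (hsq m).2 fun p hp hps =>
        Nat.dvd_of_mem_primeFactors (mem_filter.1 (h p hp hps)).1
      refine ⟨(hsq n).2 fun p hp hps => (mem_filter.1 (h p hp hps)).2.1, hsm, ?_⟩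
      refine Nat.coprime_of_dvd fun p hp hpm hps => (mem_filter.1 (h p hp hps)).2.2 ?_
      rw [← Nat.div_mul_cancel hsm, sq]
      exact mul_dvd_mul hpm hps
    · rintro ⟨hn, hsm, hc⟩ p hp hps
      refine mem_filter.2 ⟨Nat.mem_primeFactors.2 ⟨hp, hps.trans hsm, hm.ne'⟩, hps.trans hn, ?_⟩
      intro hp2
      obtain ⟨t, rfl⟩ := hps
      obtain ⟨u, rfl⟩ := hsm
      have hpt : p.Coprime t := by
        rw [Nat.squarefree_mul_iff] at hs; exact hs.1
      rw [Nat.mul_div_cancel_left _ hs0] at hc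
      rw [sq, mul_assoc] at hp2
      have h3 : p ∣ t * u := Nat.dvd_of_mul_dvd_mul_left hp.pos hp2
      have h4 : p ∣ u := hpt.dvd_of_dvd_mul_left h3
      exact hp.one_lt.ne' (Nat.eq_one_of_dvd_coprimes hc h4 (dvd_mul_right _ _))
  have hsum : ∑ s ∈ Ioc 0 H, (if s ∣ n then (if s ∣ m ∧ (m / s).Coprime s then μ s else 0) else 0)
      = ∑ s ∈ g.divisors, μ s := by
    have hmu : ∀ s, (if s ∣ n then (if s ∣ m ∧ (m / s).Coprime s then μ s else 0) else 0) =
        if s ∣ g then μ s else 0 := by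
      intro s
      by_cases hs : Squarefree s
      · rw [← ite_and]
        exact if_congr (hdvd s hs).symm rfl rfl
      · simp [moebius_eq_zero_of_not_squarefree hs]
    simp_rw [hmu]
    rw [← sum_filter]
    refine sum_congr ?_ fun _ _ => rfl
    ext s
    simp only [mem_filter, mem_Ioc, Nat.mem_divisors]
    constructor
    · rintro ⟨-, h⟩; exact ⟨h, hg0⟩
    · rintro ⟨h, -⟩
      have hsm := ((hdvd s (hgsq.squarefree_of_dvd h)).1 h).2.1
      exact ⟨⟨Nat.pos_of_dvd_of_pos hsm hm, (Nat.le_of_dvd hm hsm).trans hmH⟩, h⟩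
  rw [hsum, sum_moebius_divisors]
  by_cases h : EisensteinAt m n <;> simp [h, hg1]

lemma sum_Icc_natAbs (f : ℕ → ℤ) (H : ℕ) :
    ∑ a ∈ Icc (-(H : ℤ)) H, f a.natAbs = f 0 + 2 * ∑ m ∈ Ioc 0 H, f m := by
  induction H with
  | zero => simp
  | succ H ih =>
    have : Icc (-((H + 1 : ℕ) : ℤ)) ((H + 1 : ℕ) : ℤ) =
        insert (-((H + 1 : ℕ) : ℤ)) (insert ((H + 1 : ℕ) : ℤ) (Icc (-(H : ℤ)) H)) := by
      ext x; simp only [mem_Icc, mem_insert]; lia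
    rw [this, sum_insert (by simp only [mem_Icc, mem_insert]; lia), sum_insert (by simp), ih,
      Int.natAbs_neg, Int.natAbs_natCast, ← Finset.insert_Ioc_right_eq_Ioc_add_one (by lia),
      sum_insert (by simp)]
    ring

lemma not_eisensteinAt_zero (n : ℕ) : ¬ EisensteinAt 0 n := by
  rintro ⟨p, -, -, -, h⟩; exact h (dvd_zero _)

open Classical in
lemma Ecount_two_eq_sum (H : ℕ) : (Ecount 2 H : ℤ) =
    ∑ a ∈ Icc (-(H : ℤ)) H, ∑ b ∈ Icc (-(H : ℤ)) H,
      if EisensteinAt a.natAbs b.natAbs then 1 else 0 := by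
  have hcard : Ecount 2 H = #{x ∈ Icc (-(H : ℤ)) H ×ˢ Icc (-(H : ℤ)) H |
      EisensteinAt x.1.natAbs x.2.natAbs} := by
    rw [Ecount, ← Nat.card_eq_finsetCard]
    have hE : ∀ x y : ℤ, EisensteinAt x.natAbs y.natAbs ↔
        ∃ p : ℕ, p.Prime ∧ (p : ℤ) ∣ x ∧ (p : ℤ) ∣ y ∧ ¬ (p : ℤ) ^ 2 ∣ x := by
      intro x y
      simp only [EisensteinAt, ← Int.natCast_dvd, Nat.cast_pow]
    refine Nat.card_congr
      { toFun := fun a => ⟨(a.1 0, a.1 1), ?_⟩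
        invFun := fun x => ⟨![x.1.1, x.1.2, 1], ?_⟩
        left_inv := ?_
        right_inv := ?_ }
    · obtain ⟨a, h1, h2, p, hp, h3, h4, -⟩ := a
      simp only [mem_filter, mem_product, mem_Icc, hE, ← abs_le]
      exact ⟨⟨h2 0 (by simp), h2 1 (by simp)⟩, p, hp, h3 0 (by simp), h3 1 (by simp), h4⟩
    · obtain ⟨⟨x, y⟩, hx⟩ := x
      simp only [mem_filter, mem_product, mem_Icc, hE, ← abs_le] at hx
      obtain ⟨⟨h1, h2⟩, p, hp, h3, h4, h5⟩ := hx
      refine ⟨rfl, ?_, p, hp, ?_, h5, ?_⟩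
      · intro i hi
        fin_cases i
        · exact h1
        · exact h2
        · simp at hi
      · intro i hi
        fin_cases i
        · exact h3
        · exact h4
        · simp at hi
      · intro h
        have h' : (p : ℤ) ∣ ((1 : ℕ) : ℤ) := h
        exact hp.one_lt.ne' (Nat.dvd_one.1 (Int.natCast_dvd_natCast.1 h'))
    · rintro ⟨a, h1, h2⟩
      ext i
      fin_cases i
      · rfl
      · rfl
      · exact h1.symm
    · rintro ⟨⟨x, y⟩, hx⟩
      rfl
  rw [hcard, card_filter, sum_product]
  push_cast
  rfl

/-- The `m = s k ≤ H` whose cofactor `k` is coprime to `s` correspond to the `k ≤ H / s` coprime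
to `s`. -/
lemma card_unitary_multiples (H : ℕ) {s : ℕ} (hs : 0 < s) :
    #{m ∈ Ioc 0 H | s ∣ m ∧ (m / s).Coprime s} = coprimeCount H s := by
  rw [coprimeCount]
  symm
  refine card_nbij (fun k => s * k) ?_ ?_ ?_
  · intro k hk
    simp only [coe_filter, mem_Ioc, Set.mem_ofPred_eq] at hk ⊢
    refine ⟨⟨Nat.mul_pos hs hk.1.1, ?_⟩, dvd_mul_right _ _, ?_⟩
    · rw [mul_comm]; exact (Nat.le_div_iff_mul_le hs).1 hk.1.2
    · rw [Nat.mul_div_cancel_left _ hs]; exact hk.2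
  · intro a _ b _ h
    exact Nat.eq_of_mul_eq_mul_left hs h
  · intro m hm
    simp only [coe_filter, mem_Ioc, Set.mem_ofPred_eq] at hm
    obtain ⟨⟨h1, h2⟩, h3, h4⟩ := hm
    refine ⟨m / s, ?_, Nat.mul_div_cancel' h3⟩
    simp only [coe_filter, mem_Ioc, Set.mem_ofPred_eq]
    exact ⟨⟨Nat.div_pos (Nat.le_of_dvd h1 h3) hs, Nat.div_le_div_right h2⟩, h4⟩

/-- Exact inclusion–exclusion formula; the factors `1 + 2 * (H / s)` and `2 * coprimeCount H s`
count the admissible linear and constant coefficients respectively. -/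
lemma Ecount_two_eq (H : ℕ) : (Ecount 2 H : ℤ) = 2 * (H * (1 + 2 * H)) -
    2 * ∑ s ∈ Ioc 0 H, μ s * ((1 + 2 * (H / s : ℕ)) * coprimeCount H s) := by
  classical
  have hdvd : ∀ s : ℕ, ∀ c : ℤ, (∑ b ∈ Icc (-(H : ℤ)) H, if s ∣ b.natAbs then c else 0) =
      c * (1 + 2 * (H / s : ℕ)) := by
    intro s c
    rw [sum_Icc_natAbs (fun n => if s ∣ n then c else 0), ← sum_filter, sum_const,
      Nat.Ioc_filter_dvd_card_eq_div]
    simp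
    ring
  rw [Ecount_two_eq_sum, sum_Icc_natAbs (fun m => ∑ b ∈ Icc (-(H : ℤ)) H,
    if EisensteinAt m b.natAbs then 1 else 0)]
  simp only [not_eisensteinAt_zero, if_false, sum_const_zero, zero_add]
  have h1 : ∀ m ∈ Ioc 0 H, (∑ b ∈ Icc (-(H : ℤ)) H, if EisensteinAt m b.natAbs then (1 : ℤ) else 0)
      = (1 + 2 * H) - ∑ s ∈ Ioc 0 H,
        (if s ∣ m ∧ (m / s).Coprime s then μ s else 0) * (1 + 2 * (H / s : ℕ)) := by
    intro m hm
    rw [mem_Ioc] at hm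
    rw [sum_congr rfl fun b _ => indicator_eisensteinAt hm.1 hm.2 b.natAbs, sum_sub_distrib,
      sum_comm, sum_congr rfl fun s _ => hdvd s _]
    congr 1
    simp
    lia
  rw [sum_congr rfl h1, sum_sub_distrib, sum_comm, mul_sub]
  congr 2
  · simp
  · refine sum_congr rfl fun s hs => ?_
    rw [← sum_mul, ← sum_filter, sum_const, card_unitary_multiples H (mem_Ioc.1 hs).1]
    simp
    ring

/-! ### The asymptotic formula -/

theorem eisenstein_monic_count_asymptotic_deg_two :
    ∃ C : ℝ, ∀ H : ℕ, 2 ≤ H →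
      |(Ecount 2 H : ℝ) - theta2 * 4 * (H : ℝ) ^ 2| ≤ C * H * (Real.log H) ^ 2 := by
  -- Since `log H ≥ 1/2`, one has `1 + L ≤ 3 L` and `6 ≤ 24 L²`, so `6 + 6 (1 + L)² ≤ 78 L²`.
  refine ⟨78, fun H hH => ?_⟩
  have hH0 : (0 : ℝ) < H := by positivity
  set L := Real.log H with hL
  have hlog : 1 / 2 ≤ L := by
    have h1 := Real.log_two_gt_d9
    have h2 : Real.log 2 ≤ L := Real.log_le_log (by norm_num) (by exact_mod_cast hH)
    linarith
  set A : ℝ := ∑ s ∈ Ioc 0 H, (μ s : ℝ) * ((1 + 2 * (H / s : ℕ)) * coprimeCount H s) with hA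
  have hE : (Ecount 2 H : ℝ) = 2 * (H * (1 + 2 * H)) - 2 * A := by
    rw [hA]
    simpa only [Int.cast_sum, Int.cast_mul, Int.cast_natCast, Int.cast_sub, Int.cast_add,
      Int.cast_ofNat, Int.cast_one] using congrArg (Int.cast : ℤ → ℝ) (Ecount_two_eq H)
  have hmain : |A - 2 * (H : ℝ) ^ 2 * ∑ s ∈ Ioc 0 H, mainTerm s| ≤ 3 * H * (1 + L) ^ 2 := by
    rw [hA, mul_sum, ← sum_sub_distrib]
    calc _ ≤ ∑ s ∈ Ioc 0 H, 3 * (H : ℝ) * (#s.divisors / s) :=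
          (abs_sum_le_sum_abs _ _).trans
            (sum_le_sum fun s hs => abs_term_sub_le H (mem_Ioc.1 hs).1)
      _ = 3 * H * ∑ s ∈ Ioc 0 H, (#s.divisors / s : ℝ) := by rw [mul_sum]
      _ ≤ _ := by gcongr; exact sum_card_divisors_div_le
  have htail := abs_tsum_mainTerm_sub_le (H := H) (by lia)
  set S := ∑' s, mainTerm s
  set T := ∑ s ∈ Ioc 0 H, mainTerm s
  have e : (Ecount 2 H : ℝ) - theta2 * 4 * (H : ℝ) ^ 2 =
      2 * H + (-2 * (A - 2 * (H : ℝ) ^ 2 * T) + 4 * (H : ℝ) ^ 2 * (S - T)) := by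
    rw [hE, theta2_eq]; ring
  have hS : |4 * (H : ℝ) ^ 2 * (S - T)| ≤ 4 * (H : ℝ) := by
    rw [abs_mul, abs_of_nonneg (by positivity : 0 ≤ 4 * (H : ℝ) ^ 2)]
    calc _ ≤ 4 * (H : ℝ) ^ 2 * (H : ℝ)⁻¹ := by gcongr
      _ = _ := by field_simp
  rw [e]
  calc _ ≤ |2 * (H : ℝ)| + (|-2 * (A - 2 * (H : ℝ) ^ 2 * T)| + |4 * (H : ℝ) ^ 2 * (S - T)|) :=
        (abs_add_le _ _).trans (by gcongr; exact abs_add_le _ _)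
    _ ≤ 2 * (H : ℝ) + (2 * (3 * H * (1 + L) ^ 2) + 4 * H) := by
        rw [abs_of_nonneg (by positivity : 0 ≤ 2 * (H : ℝ)), abs_mul, abs_neg,
          abs_two]
        gcongr
    _ = H * (6 + 6 * (1 + L) ^ 2) := by ring
    _ ≤ H * (78 * L ^ 2) := by gcongr; nlinarith
    _ = _ := by ring
end

section
/- For every integer d ≥ 2 there exists a constant C (depending only on d) such that for all integers s, H with 1 ≤ s ≤ H, |#G_d(s,H) − 2^d H^d φ(s)/s^{d+1}| ≤ C · H^{d−1} · 2^{ω(s)} / s^{d−1}. -/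
/-!
Dividing the coefficients by `s` turns `G_d(s,H)` into the set of vectors `(b_0, …, b_{d-1})` with
`|b_i| ≤ N := ⌊H/s⌋` and `b_0` coprime to `s`, so the count is exactly `A * (2N+1)^(d-1)`, where `A`
is the number of integers in `[-N, N]` coprime to `s` (`Gcount_eq`).

With `x = H/s ≥ 1`, the sieve of Eratosthenes–Legendre gives `|A - 2xφ(s)/s| ≤ 2^ω(s)`
(`abs_siftedCount_sub_le`): passing from a set `S` of primes to `S ∪ {p}` removes the multiples of
`p`, which are counted by the same problem with `x/p` in place of `x`, so the error at most doubles
at each step. Also `|(2N+1) - 2x| ≤ 1`, hence `(2N+1)^(d-1) = (2x)^(d-1) + O(x^(d-2))`, and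
multiplying the two estimates gives the error term `O(x^(d-1) 2^ω(s))`.
-/

/-- `#G_d(s,H)`: the number of monic integer polynomials
`X^d + a_{d-1}X^{d-1} + ⋯ + a_0` of height at most `H` such that `s ∣ a_i` for
`0 ≤ i ≤ d-1` and `gcd(a_0/s, s) = 1`. Represented by coefficient vectors
`a : Fin (d+1) → ℤ` with `a d = 1`. -/
noncomputable def Gcount (d s H : ℕ) : ℕ :=
  Nat.card {a : Fin (d + 1) → ℤ //
    a (Fin.last d) = 1 ∧
    (∀ i : Fin (d + 1), i.val < d → |a i| ≤ (H : ℤ) ∧ (s : ℤ) ∣ a i) ∧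
    Int.gcd (a 0 / (s : ℤ)) (s : ℤ) = 1}

/-- The integers of absolute value at most `N` divisible by no element of `S`. -/
noncomputable def sifted (S : Finset ℕ) (N : ℕ) : Finset ℤ :=
  (Finset.Icc (-(N : ℤ)) N).filter (fun n => ∀ p ∈ S, ¬ (p : ℤ) ∣ n)

/-- Legendre's recursion: the multiples of a new prime `p` among the sifted integers up to `N`
correspond to the sifted integers up to `N / p`. -/
lemma card_sifted_insert (S : Finset ℕ) (p N : ℕ) (hp : p.Prime) (hS : ∀ q ∈ S, q.Prime)
    (hpS : p ∉ S) :
    (sifted (insert p S) N).card + (sifted S (N / p)).card = (sifted S N).card := by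
  have hp0 : (0 : ℤ) < p := by exact_mod_cast hp.pos
  have h1 : ((sifted S N).filter (fun n => ¬ (p : ℤ) ∣ n)) = sifted (insert p S) N := by
    ext n
    simp only [sifted, Finset.mem_filter, Finset.mem_insert, forall_eq_or_imp]
    tauto
  have h2 : (sifted S (N / p)).card = ((sifted S N).filter (fun n => (p : ℤ) ∣ n)).card := by
    have hle : ∀ m : ℤ, m ≤ ((N / p : ℕ) : ℤ) ↔ (p : ℤ) * m ≤ N := by
      intro m
      rw [Int.natCast_div, Int.le_ediv_iff_mul_le hp0, mul_comm]
    have hdvd : ∀ q ∈ S, ∀ m : ℤ, (q : ℤ) ∣ p * m ↔ (q : ℤ) ∣ m := by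
      intro q hq m
      have hcop : IsCoprime (q : ℤ) (p : ℤ) := by
        rw [Nat.isCoprime_iff_coprime, Nat.coprime_primes (hS q hq) hp]
        rintro rfl
        exact hpS hq
      exact ⟨hcop.dvd_of_dvd_mul_left, fun h => h.mul_left _⟩
    have hmem : ∀ m : ℤ, (p : ℤ) * m ∈ sifted S N ↔ m ∈ sifted S (N / p) := by
      intro m
      have a1 := hle m
      have a2 := hle (-m)
      rw [mul_neg] at a2
      simp only [sifted, Finset.mem_filter, Finset.mem_Icc]
      refine and_congr ?_ (forall₂_congr fun q hq => not_congr (hdvd q hq m))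
      constructor
      · rintro ⟨h, h'⟩
        exact ⟨by have := a2.2 (by linarith); linarith, a1.2 h'⟩
      · rintro ⟨h, h'⟩
        exact ⟨by have := a2.1 (by linarith); linarith, a1.1 h'⟩
    refine Finset.card_bij (fun m _ => (p : ℤ) * m) ?_ ?_ ?_
    · intro m hm
      exact Finset.mem_filter.2 ⟨(hmem m).2 hm, dvd_mul_right _ _⟩
    · intro m _ n _ h
      exact mul_left_cancel₀ hp0.ne' h
    · intro n hn
      obtain ⟨hn, m, rfl⟩ := Finset.mem_filter.1 hn
      exact ⟨m, (hmem m).1 hn, rfl⟩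
  rw [h2, ← h1, add_comm]
  exact Finset.card_filter_add_card_filter_not _

lemma abs_two_mul_floor_add_one_sub_le (y : ℝ) (hy : 0 ≤ y) :
    |(2 * (⌊y⌋₊ : ℝ) + 1) - 2 * y| ≤ 1 := by
  have h1 := Nat.floor_le hy
  have h2 := Nat.lt_floor_add_one y
  rw [abs_le]
  constructor <;> linarith

lemma card_Icc_neg (N : ℕ) : (Finset.Icc (-(N : ℤ)) N).card = 2 * N + 1 := by
  rw [Int.card_Icc]
  omega

/-- Legendre's sieve by induction on the set of primes: each new prime at most doubles the error,
and the empty set contributes `|(2⌊y⌋ + 1) - 2y| ≤ 1`. -/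
lemma abs_card_sifted_sub_le (S : Finset ℕ) (hS : ∀ q ∈ S, q.Prime) :
    ∀ y : ℝ, 0 ≤ y →
      |((sifted S ⌊y⌋₊).card : ℝ) - 2 * y * ∏ p ∈ S, (1 - (p : ℝ)⁻¹)| ≤ 2 ^ S.card := by
  induction S using Finset.induction_on with
  | empty =>
    intro y hy
    have := abs_two_mul_floor_add_one_sub_le y hy
    simpa [sifted, card_Icc_neg, -Int.card_Icc] using this
  | insert p S hpS ih =>
    intro y hy
    have hS' : ∀ q ∈ S, q.Prime := fun q hq => hS q (Finset.mem_insert_of_mem hq)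
    have hp := hS p (Finset.mem_insert_self _ _)
    have e := card_sifted_insert S p ⌊y⌋₊ hp hS' hpS
    rw [← Nat.floor_div_natCast] at e
    have e' : ((sifted (insert p S) ⌊y⌋₊).card : ℝ)
        = (sifted S ⌊y⌋₊).card - (sifted S ⌊y / p⌋₊).card := by
      rw [← e]; push_cast; ring
    have i1 := ih hS' y hy
    have i2 := ih hS' (y / p) (by positivity)
    rw [e', Finset.prod_insert hpS, Finset.card_insert_of_notMem hpS, pow_succ]
    have : ((sifted S ⌊y⌋₊).card : ℝ) - (sifted S ⌊y / p⌋₊).card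
          - 2 * y * ((1 - (p : ℝ)⁻¹) * ∏ q ∈ S, (1 - (q : ℝ)⁻¹))
        = ((sifted S ⌊y⌋₊).card - 2 * y * ∏ q ∈ S, (1 - (q : ℝ)⁻¹))
          - ((sifted S ⌊y / p⌋₊).card - 2 * (y / p) * ∏ q ∈ S, (1 - (q : ℝ)⁻¹)) := by
      ring
    rw [this]
    refine (abs_sub _ _).trans ?_
    linarith

lemma mem_sifted_primeFactors (s N : ℕ) (hs : s ≠ 0) (n : ℤ) :
    n ∈ sifted s.primeFactors N ↔ |n| ≤ N ∧ Int.gcd n s = 1 := by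
  have : Int.gcd n s = 1 ↔ ∀ p ∈ s.primeFactors, ¬ (p : ℤ) ∣ n := by
    rw [Int.gcd_eq_natAbs, Int.natAbs_natCast, ← Nat.coprime_iff_gcd_eq_one]
    constructor
    · intro h p hp hpn
      have hp' := Nat.prime_of_mem_primeFactors hp
      exact Nat.not_coprime_of_dvd_of_dvd hp'.one_lt (Int.natCast_dvd.1 hpn)
        (Nat.dvd_of_mem_primeFactors hp) h
    · intro h
      refine Nat.coprime_of_dvd fun p hp h1 h2 => ?_
      exact h p (Nat.mem_primeFactors.2 ⟨hp, h2, hs⟩) (Int.natCast_dvd.2 h1)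
  rw [sifted, Finset.mem_filter, Finset.mem_Icc, this, abs_le]

lemma abs_siftedCount_sub_le (s : ℕ) (hs : s ≠ 0) (y : ℝ) (hy : 0 ≤ y) :
    |((sifted s.primeFactors ⌊y⌋₊).card : ℝ) - 2 * y * (s.totient / s)|
      ≤ 2 ^ s.primeFactors.card := by
  have h := abs_card_sifted_sub_le s.primeFactors
    (fun q hq => Nat.prime_of_mem_primeFactors hq) y hy
  have ht : (s.totient : ℝ) = s * ∏ p ∈ s.primeFactors, (1 - (p : ℝ)⁻¹) := by
    have := Nat.totient_eq_mul_prod_factors s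
    have h' := congrArg (fun q : ℚ => (q : ℝ)) this
    push_cast at h'
    exact h'
  have hs' : (s : ℝ) ≠ 0 := by exact_mod_cast hs
  rwa [ht, mul_div_cancel_left₀ _ hs']

/-- The exact count: the free coefficients divided by `s` range independently, the constant one over
the integers coprime to `s`. -/
lemma Gcount_eq (k s H : ℕ) (hs : s ≠ 0) :
    Gcount (k + 1) s H = (sifted s.primeFactors (H / s)).card * (2 * (H / s) + 1) ^ k := by
  have hs0 : (0 : ℤ) < s := by exact_mod_cast Nat.pos_of_ne_zero hs
  set N := H / s with hN
  have habs : ∀ m : ℤ, |(s : ℤ) * m| ≤ H ↔ |m| ≤ N := by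
    intro m
    rw [abs_mul, abs_of_pos hs0, hN, Int.natCast_div, Int.le_ediv_iff_mul_le hs0, mul_comm]
  let T : Fin (k + 1) → Finset ℤ :=
    Fin.cons (sifted s.primeFactors N) (fun _ => Finset.Icc (-(N : ℤ)) N)
  have hT : ∀ b : Fin (k + 1) → ℤ, b ∈ Fintype.piFinset T ↔
      (∀ i, |b i| ≤ N) ∧ Int.gcd (b 0) s = 1 := by
    intro b
    rw [Fintype.mem_piFinset, Fin.forall_fin_succ, Fin.forall_fin_succ]
    simp only [T, Fin.cons_zero, Fin.cons_succ, mem_sifted_primeFactors s N hs, Finset.mem_Icc,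
      ← abs_le]
    tauto
  have hcard : (Fintype.piFinset T).card
      = (sifted s.primeFactors N).card * (2 * N + 1) ^ k := by
    rw [Fintype.card_piFinset, Fin.prod_univ_succ]
    simp [T, card_Icc_neg, -Int.card_Icc]
  rw [← hcard, ← Nat.card_eq_finsetCard, Gcount]
  refine Nat.card_congr ⟨fun a => ⟨fun i => a.1 i.castSucc / s, ?_⟩,
    fun b => ⟨Fin.snoc (fun i => (s : ℤ) * b.1 i) 1, ?_⟩, ?_, ?_⟩
  · obtain ⟨a, -, ha, hg⟩ := a
    refine (hT _).2 ⟨fun i => ?_, hg⟩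
    obtain ⟨h1, h2⟩ := ha i.castSucc i.isLt
    rwa [← habs, Int.mul_ediv_cancel' h2]
  · obtain ⟨b, hb⟩ := b
    obtain ⟨hb, hg⟩ := (hT b).1 hb
    refine ⟨Fin.snoc_last _ _, fun i hi => ?_, ?_⟩
    · obtain ⟨j, rfl⟩ : ∃ j : Fin (k + 1), i = j.castSucc := ⟨⟨i, hi⟩, rfl⟩
      rw [Fin.snoc_castSucc]
      exact ⟨(habs _).2 (hb j), dvd_mul_right _ _⟩
    · rw [← Fin.castSucc_zero, Fin.snoc_castSucc, Int.mul_ediv_cancel_left _ hs0.ne']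
      exact hg
  · rintro ⟨a, hl, ha, hg⟩
    refine Subtype.ext (funext fun i => ?_)
    induction i using Fin.lastCases with
    | last => simp [hl]
    | cast i =>
      simp only [Fin.snoc_castSucc]
      exact Int.mul_ediv_cancel' (ha i.castSucc i.isLt).2
  · rintro ⟨b, hb⟩
    refine Subtype.ext (funext fun i => ?_)
    simp only [Fin.snoc_castSucc]
    exact Int.mul_ediv_cancel_left _ hs0.ne'

theorem Gcount_asymptotic (d : ℕ) (hd : 2 ≤ d) :
    ∃ C : ℝ, ∀ s H : ℕ, 1 ≤ s → s ≤ H →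
      |(Gcount d s H : ℝ) - 2 ^ d * (H : ℝ) ^ d * (Nat.totient s) / (s : ℝ) ^ (d + 1)|
        ≤ C * (H : ℝ) ^ (d - 1) * 2 ^ s.primeFactors.card / (s : ℝ) ^ (d - 1) := by
  obtain ⟨k, rfl⟩ : ∃ k, d = k + 1 := ⟨d - 1, by omega⟩
  have hk : k ≠ 0 := by omega
  -- The summand `3 ^ k` comes from the sieve error times `(2⌊x⌋ + 1)^k ≤ (3x)^k`, the other one
  -- from `2x` times the error `k (3x)^(k-1)` in replacing `(2⌊x⌋ + 1)^k` by `(2x)^k`.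
  refine ⟨3 ^ k + 2 * (k * 3 ^ (k - 1)), fun s H hs hsH => ?_⟩
  have hs0 : s ≠ 0 := by omega
  have hsR : (0 : ℝ) < s := by exact_mod_cast hs
  set x : ℝ := (H : ℝ) / s with hx
  have hx1 : 1 ≤ x := by
    rw [hx, one_le_div hsR]
    exact_mod_cast hsH
  have hfl : H / s = ⌊x⌋₊ := (Nat.floor_div_eq_div H s).symm
  have hA := abs_siftedCount_sub_le s hs0 x (by linarith)
  have hM := abs_two_mul_floor_add_one_sub_le x (by linarith)
  have hM3 : 2 * (⌊x⌋₊ : ℝ) + 1 ≤ 3 * x := by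
    have := Nat.floor_le (show 0 ≤ x by linarith)
    linarith
  have hφ : (s.totient : ℝ) / s ≤ 1 := by
    rw [div_le_one hsR]
    exact_mod_cast Nat.totient_le s
  have hφ0 : 0 ≤ (s.totient : ℝ) / s := by positivity
  rw [Nat.add_sub_cancel, Gcount_eq k s H hs0, hfl]
  have hmain : 2 ^ (k + 1) * (H : ℝ) ^ (k + 1) * s.totient / (s : ℝ) ^ (k + 1 + 1)
      = (2 * x * (s.totient / s)) * (2 * x) ^ k := by
    rw [hx, mul_pow, div_pow]; field_simp; ring
  have hrhs : (3 ^ k + 2 * (k * 3 ^ (k - 1))) * (H : ℝ) ^ k * 2 ^ s.primeFactors.card / (s : ℝ) ^ k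
      = (3 ^ k + 2 * (k * 3 ^ (k - 1))) * x ^ k * 2 ^ s.primeFactors.card := by
    rw [hx, div_pow]; ring
  rw [hmain, hrhs]
  push_cast
  set A : ℝ := ((sifted s.primeFactors ⌊x⌋₊).card : ℝ)
  set M : ℝ := 2 * (⌊x⌋₊ : ℝ) + 1 with hMdef
  have hM0 : 0 ≤ M := by positivity
  set B : ℝ := 2 * x * (s.totient / s) with hB
  set W : ℝ := 2 ^ s.primeFactors.card
  have hW : 1 ≤ W := one_le_pow₀ (by norm_num)
  have hB0 : 0 ≤ B := by positivity
  have hB2 : B ≤ 2 * x := mul_le_of_le_one_right (by linarith) hφ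
  have hpow : |M ^ k - (2 * x) ^ k| ≤ k * (3 * x) ^ (k - 1) := by
    have h := abs_pow_sub_pow_le M (2 * x) k
    have hmax : max |M| |2 * x| ≤ 3 * x := by
      rw [abs_of_nonneg hM0, abs_of_nonneg (by linarith : (0:ℝ) ≤ 2 * x)]
      exact max_le hM3 (by linarith)
    calc _ ≤ |M - 2 * x| * k * max |M| |2 * x| ^ (k - 1) := h
      _ ≤ 1 * k * (3 * x) ^ (k - 1) := by gcongr
      _ = _ := by ring
  calc |A * M ^ k - B * (2 * x) ^ k|
      = |(A - B) * M ^ k + B * (M ^ k - (2 * x) ^ k)| := by congr 1; ring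
    _ ≤ |A - B| * M ^ k + B * |M ^ k - (2 * x) ^ k| := by
        refine (abs_add_le _ _).trans ?_
        rw [abs_mul, abs_mul, abs_of_nonneg (pow_nonneg hM0 k), abs_of_nonneg hB0]
    _ ≤ W * (3 * x) ^ k + 2 * x * (k * (3 * x) ^ (k - 1)) := by gcongr
    _ = 3 ^ k * x ^ k * W + 2 * (k * 3 ^ (k - 1)) * x ^ k * 1 := by
        obtain ⟨j, rfl⟩ := Nat.exists_eq_succ_of_ne_zero hk
        simp only [Nat.succ_eq_add_one, Nat.add_sub_cancel]
        ring
    _ ≤ 3 ^ k * x ^ k * W + 2 * (k * 3 ^ (k - 1)) * x ^ k * W := by gcongr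
    _ = _ := by ring
end

section
/- For all integers d ≥ 2 and H ≥ 1, E_d(H) = −∑_{s=2}^{H} μ(s) · #G_d(s,H), where μ is the Möbius function. -/
/-- The prime-by-prime form of the condition defining `G_d(s,H)`, for squarefree `s`. The family `b`
stands for the non-leading coefficients and `i₀` for the index of the constant one. -/
lemma squarefree_dvd_gcd_iff {ι : Type*} (b : ι → ℤ) (i₀ : ι) {s : ℕ} (hs : Squarefree s) :
    ((∀ i, (s : ℤ) ∣ b i) ∧ Int.gcd (b i₀ / (s : ℤ)) (s : ℤ) = 1) ↔
      ∀ p : ℕ, p.Prime → p ∣ s → (∀ i, (p : ℤ) ∣ b i) ∧ ¬ ((p : ℤ) ^ 2 ∣ b i₀) := by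
  have hs0 : (s : ℤ) ≠ 0 := by exact_mod_cast hs.ne_zero
  constructor
  · rintro ⟨h1, h2⟩ p hp hps
    refine ⟨fun i => (Int.natCast_dvd_natCast.2 hps).trans (h1 i), fun hsq => ?_⟩
    obtain ⟨t, ht⟩ := h1 i₀
    rw [ht, Int.mul_ediv_cancel_left _ hs0] at h2
    obtain ⟨r, rfl⟩ := hps
    have hpr : ¬ p ∣ r := fun h => hp.not_isUnit (hs p (Nat.mul_dvd_mul_left p h))
    have hp0 : (p : ℤ) ≠ 0 := by exact_mod_cast hp.ne_zero
    have hpZ : Prime (p : ℤ) := Nat.prime_iff_prime_int.1 hp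
    have hrt : (p : ℤ) ∣ r * t := by
      rw [ht, pow_two] at hsq
      push_cast at hsq
      rw [mul_assoc] at hsq
      exact (mul_dvd_mul_iff_left hp0).1 hsq
    have hpt : (p : ℤ) ∣ t :=
      (hpZ.dvd_or_dvd hrt).resolve_left fun h => hpr (Int.natCast_dvd_natCast.1 h)
    have h3 : p ∣ Int.gcd t ((p * r : ℕ) : ℤ) :=
      Int.dvd_gcd hpt (Int.natCast_dvd_natCast.2 (dvd_mul_right p r))
    rw [h2] at h3
    exact hp.one_lt.ne' (Nat.dvd_one.1 h3)
  · intro h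
    have h1 : ∀ i, (s : ℤ) ∣ b i := by
      intro i
      rw [Int.natCast_dvd, ← Nat.prod_primeFactors_of_squarefree hs]
      refine Finset.prod_primes_dvd _ (fun p hp => (Nat.prime_of_mem_primeFactors hp).prime) ?_
      intro p hp
      exact Int.natCast_dvd.1
        ((h p (Nat.prime_of_mem_primeFactors hp) (Nat.dvd_of_mem_primeFactors hp)).1 i)
    refine ⟨h1, ?_⟩
    by_contra hg
    obtain ⟨p, hp, hpg⟩ := Nat.exists_prime_and_dvd hg
    have hpgZ : (p : ℤ) ∣ (Int.gcd (b i₀ / (s : ℤ)) (s : ℤ) : ℤ) := Int.natCast_dvd_natCast.2 hpg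
    have hps : (p : ℤ) ∣ s := hpgZ.trans (Int.gcd_dvd_right _ _)
    have hpt : (p : ℤ) ∣ b i₀ / s := hpgZ.trans (Int.gcd_dvd_left _ _)
    refine (h p hp (Int.natCast_dvd_natCast.1 hps)).2 ?_
    rw [← Int.mul_ediv_cancel' (h1 i₀), pow_two]
    exact mul_dvd_mul hps hpt

lemma dvd_prod_witnesses_iff {S : Finset ℕ} (hS : ∀ p ∈ S, p.Prime) {s : ℕ} (hs : Squarefree s) :
    s ∣ ∏ p ∈ S, p ↔ ∀ p : ℕ, p.Prime → p ∣ s → p ∈ S := by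
  constructor
  · intro h p hp hps
    obtain ⟨q, hq, hpq⟩ := (hp.prime.dvd_finsetProd_iff _).1 (hps.trans h)
    rwa [(Nat.prime_dvd_prime_iff_eq hp (hS q hq)).1 hpq]
  · intro h
    rw [← Nat.prod_primeFactors_of_squarefree hs]
    exact Finset.prod_dvd_prod_of_subset _ _ _ fun p hp =>
      h p (Nat.prime_of_mem_primeFactors hp) (Nat.dvd_of_mem_primeFactors hp)

open Classical in
/-- The theorem for a single coefficient family: the signed count of the `s ≥ 2` whose `G`-condition
holds is minus the indicator of the Eisenstein condition. -/
lemma sum_moebius_witness {ι : Type*} (b : ι → ℤ) (i₀ : ι) (H : ℕ) (hH : 1 ≤ H)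
    (hb : |b i₀| ≤ (H : ℤ)) :
    (∑ s ∈ Finset.Icc 2 H, if (∀ i, (s : ℤ) ∣ b i) ∧ Int.gcd (b i₀ / (s : ℤ)) (s : ℤ) = 1
        then ArithmeticFunction.moebius s else 0) =
      -(if ∃ p : ℕ, p.Prime ∧ (∀ i, (p : ℤ) ∣ b i) ∧ ¬ ((p : ℤ) ^ 2 ∣ b i₀) then 1 else 0) := by
  have hb' : (b i₀).natAbs ≤ H := by rw [Int.abs_eq_natAbs] at hb; exact_mod_cast hb
  let S : Finset ℕ := (Finset.Icc 1 H).filter fun p =>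
    p.Prime ∧ (∀ i, (p : ℤ) ∣ b i) ∧ ¬ ((p : ℤ) ^ 2 ∣ b i₀)
  have hne : ∀ p : ℕ, ¬ ((p : ℤ) ^ 2 ∣ b i₀) → b i₀ ≠ 0 := fun p h h0 => h (h0 ▸ dvd_zero _)
  have hmem : ∀ p, p ∈ S ↔ p.Prime ∧ (∀ i, (p : ℤ) ∣ b i) ∧ ¬ ((p : ℤ) ^ 2 ∣ b i₀) := by
    intro p
    simp only [S, Finset.mem_filter, Finset.mem_Icc, and_iff_right_iff_imp]
    rintro ⟨hp, h1, h2⟩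
    exact ⟨hp.one_le, (Nat.le_of_dvd (Int.natAbs_pos.2 (hne p h2))
      (Int.natCast_dvd.1 (h1 i₀))).trans hb'⟩
  have hSp : ∀ p ∈ S, p.Prime := fun p hp => ((hmem p).1 hp).1
  set P := ∏ p ∈ S, p with hP
  have hP0 : P ≠ 0 := Finset.prod_ne_zero_iff.2 fun p hp => (hSp p hp).ne_zero
  have hP1 : P = 1 ↔ ¬ ∃ p : ℕ, p.Prime ∧ (∀ i, (p : ℤ) ∣ b i) ∧ ¬ ((p : ℤ) ^ 2 ∣ b i₀) := by
    rw [hP, Finset.prod_eq_one_iff]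
    refine ⟨fun h ⟨p, hp⟩ => hp.1.one_lt.ne' (h p ((hmem p).2 hp)), fun h p hp => ?_⟩
    exact (h ⟨p, (hmem p).1 hp⟩).elim
  have hPH : P ≤ H := by
    by_cases h : P = 1
    · omega
    · rw [hP1, not_not] at h
      obtain ⟨p, -, -, h2⟩ := h
      have hPd : P ∣ (b i₀).natAbs := Finset.prod_primes_dvd _ (fun p hp => (hSp p hp).prime)
        fun p hp => Int.natCast_dvd.1 (((hmem p).1 hp).2.1 i₀)
      exact (Nat.le_of_dvd (Int.natAbs_pos.2 (hne p h2)) hPd).trans hb'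
  have hterm : ∀ s ∈ Finset.Icc 2 H,
      (if (∀ i, (s : ℤ) ∣ b i) ∧ Int.gcd (b i₀ / (s : ℤ)) (s : ℤ) = 1
        then ArithmeticFunction.moebius s else 0) =
      if s ∣ P then ArithmeticFunction.moebius s else 0 := by
    intro s _
    by_cases hs : Squarefree s
    · refine if_congr ?_ rfl rfl
      rw [squarefree_dvd_gcd_iff b i₀ hs, dvd_prod_witnesses_iff hSp hs]
      refine forall_congr' fun p => forall_congr' fun hp => forall_congr' fun _ => ?_
      rw [hmem]
      exact (and_iff_right hp).symm
    · simp [ArithmeticFunction.moebius_eq_zero_of_not_squarefree hs]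
  have hdiv : (Finset.Icc 2 H).filter (· ∣ P) = P.divisors.erase 1 := by
    ext s
    simp only [Finset.mem_filter, Finset.mem_Icc, Finset.mem_erase, Nat.mem_divisors]
    constructor
    · rintro ⟨⟨h1, -⟩, h2⟩
      exact ⟨by omega, h2, hP0⟩
    · rintro ⟨h1, h2, -⟩
      have h3 := Nat.pos_of_dvd_of_pos h2 (Nat.pos_of_ne_zero hP0)
      have h4 := Nat.le_of_dvd (Nat.pos_of_ne_zero hP0) h2
      exact ⟨⟨by omega, by omega⟩, h2⟩
  have hsum : ∑ s ∈ P.divisors, ArithmeticFunction.moebius s = if P = 1 then 1 else 0 := by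
    rw [← ArithmeticFunction.coe_zeta_mul_apply, ArithmeticFunction.coe_zeta_mul_moebius,
      ArithmeticFunction.one_apply]
  rw [Finset.sum_congr rfl hterm, ← Finset.sum_filter, hdiv]
  have herase := Finset.add_sum_erase P.divisors (fun s => ArithmeticFunction.moebius s)
    (Nat.one_mem_divisors.2 hP0)
  simp only [ArithmeticFunction.moebius_apply_one] at herase
  rw [hsum] at herase
  by_cases h : P = 1
  · rw [if_neg (hP1.1 h)]
    rw [if_pos h] at herase
    omega
  · rw [if_pos (not_not.1 (mt hP1.2 h))]
    rw [if_neg h] at herase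
    omega

theorem Ecount_eq_neg_sum_moebius_Gcount (d H : ℕ) (hd : 2 ≤ d) (hH : 1 ≤ H) :
    (Ecount d H : ℤ)
      = -∑ s ∈ Finset.Icc 2 H, ArithmeticFunction.moebius s * (Gcount d s H : ℤ) := by
  classical
  -- The monic leading coefficient lies in `[-H, H]` because `1 ≤ H`, so one box holds all of `a`.
  let B : Finset (Fin (d + 1) → ℤ) :=
    (Fintype.piFinset fun _ => Finset.Icc (-(H : ℤ)) H).filter fun a => a (Fin.last d) = 1
  have hB : ∀ a, a ∈ B ↔ a (Fin.last d) = 1 ∧ ∀ i : Fin (d + 1), i.val < d → |a i| ≤ (H : ℤ) := by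
    intro a
    simp only [B, Finset.mem_filter, Fintype.mem_piFinset, Finset.mem_Icc, ← abs_le]
    refine ⟨fun h => ⟨h.2, fun i _ => h.1 i⟩, fun h => ⟨fun i => ?_, h.1⟩⟩
    by_cases hi : i.val < d
    · exact h.2 i hi
    · have : i = Fin.last d := Fin.ext (by have := i.isLt; simp; omega)
      rw [this, h.1]
      simpa using hH
  let J := {i : Fin (d + 1) // i.val < d}
  let i₀ : J := ⟨0, by simp; omega⟩
  let EP : (Fin (d + 1) → ℤ) → Prop := fun a =>
    ∃ p : ℕ, p.Prime ∧ (∀ i : J, (p : ℤ) ∣ a i) ∧ ¬ ((p : ℤ) ^ 2 ∣ a i₀)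
  let GP : ℕ → (Fin (d + 1) → ℤ) → Prop := fun s a =>
    (∀ i : J, (s : ℤ) ∣ a i) ∧ Int.gcd (a i₀ / (s : ℤ)) (s : ℤ) = 1
  have hE : Ecount d H = (B.filter EP).card := by
    refine Nat.subtype_card _ fun a => ?_
    rw [Finset.mem_filter, hB, and_assoc]
    refine and_congr_right fun hl => and_congr_right fun _ => exists_congr fun p =>
      and_congr_right fun hp => and_congr Subtype.forall ?_
    rw [hl]
    refine (and_iff_left fun h => ?_).symm
    exact (Nat.prime_iff_prime_int.1 hp).not_dvd_one h
  have hG : ∀ s, Gcount d s H = (B.filter (GP s)).card := by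
    intro s
    refine Nat.subtype_card _ fun a => ?_
    rw [Finset.mem_filter, hB, and_assoc]
    refine and_congr_right fun _ => ?_
    constructor
    · rintro ⟨h1, h2, h3⟩
      exact ⟨fun i hi => ⟨h1 i hi, h2 ⟨i, hi⟩⟩, h3⟩
    · rintro ⟨h1, h3⟩
      exact ⟨fun i hi => (h1 i hi).1, fun i => (h1 i i.2).2, h3⟩
  have key : ∀ a ∈ B, (∑ s ∈ Finset.Icc 2 H, if GP s a then ArithmeticFunction.moebius s else 0) =
      -(if EP a then 1 else 0) := by
    intro a ha
    convert sum_moebius_witness (fun i : J => a i) i₀ H hH (((hB a).1 ha).2 i₀ i₀.2)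
  have hGs : ∀ s ∈ Finset.Icc 2 H, ArithmeticFunction.moebius s * (Gcount d s H : ℤ) =
      ∑ a ∈ B, if GP s a then ArithmeticFunction.moebius s else 0 := by
    intro s _
    rw [hG, ← Finset.sum_filter, Finset.sum_const, nsmul_eq_mul, mul_comm]
  rw [Finset.sum_congr rfl hGs, Finset.sum_comm, Finset.sum_congr rfl key, Finset.sum_neg_distrib,
    neg_neg, hE, Finset.sum_boole]
end

section
/- For all integers d ≥ 2 and H ≥ 1, F_d(H) = −∑_{s=2}^{H} μ(s) · #H_d(s,H), where μ is the Möbius function. -/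
/-!
Call a prime `p` *Eisenstein* for a coefficient vector `a` when it witnesses the Eisenstein
criterion, and let `N` be the product of all Eisenstein primes of `a`. These primes divide the
nonzero integer `a 0`, so `N ≤ |a 0| ≤ H`. For squarefree `s`, the vector `a` is counted by
`Hcount d s H` exactly when every prime factor of `s` is Eisenstein for `a`
(`hCond_iff_forall_prime`), that is, when `s ∣ N`. Hence `a` contributes
`∑_{s ∣ N, s ≥ 2} μ(s) = [N = 1] - 1` to the sum (`sum_moebius_hCond`), which is `-1` if `a` has
an Eisenstein prime and `0` otherwise. Summing over all `a` in the box of height `H` gives the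
claim.
-/

/-- `F_d(H)`: number of Eisenstein polynomials (monic or not) of degree `d`
and height at most `H`. -/
noncomputable def Fcount (d H : ℕ) : ℕ :=
  Nat.card {a : Fin (d + 1) → ℤ //
    (∀ i : Fin (d + 1), |a i| ≤ (H : ℤ)) ∧
    ∃ p : ℕ, p.Prime ∧ (∀ i : Fin (d + 1), i.val < d → (p : ℤ) ∣ a i) ∧
      ¬ ((p : ℤ) ^ 2 ∣ a 0) ∧ ¬ ((p : ℤ) ∣ a (Fin.last d))}

/-- `#H_d(s,H)`: number of integer polynomials of degree `d` and height at most `H`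
with `s ∣ a_i` for `0 ≤ i ≤ d-1`, `gcd(a_0/s, s) = 1` and `gcd(a_d, s) = 1`. -/
noncomputable def Hcount (d s H : ℕ) : ℕ :=
  Nat.card {a : Fin (d + 1) → ℤ //
    (∀ i : Fin (d + 1), |a i| ≤ (H : ℤ)) ∧
    (∀ i : Fin (d + 1), i.val < d → (s : ℤ) ∣ a i) ∧
    Int.gcd (a 0 / (s : ℤ)) (s : ℤ) = 1 ∧
    Int.gcd (a (Fin.last d)) (s : ℤ) = 1}

/-- `p` witnesses the Eisenstein criterion for the polynomial with coefficient vector `a`.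
Primality of `p` is not included. -/
def IsEis {d : ℕ} (a : Fin (d + 1) → ℤ) (p : ℕ) : Prop :=
  (∀ i : Fin (d + 1), i.val < d → (p : ℤ) ∣ a i) ∧
    ¬ ((p : ℤ) ^ 2 ∣ a 0) ∧ ¬ ((p : ℤ) ∣ a (Fin.last d))

/-- The divisibility and coprimality conditions defining `H_d(s,H)`. -/
def HCond {d : ℕ} (a : Fin (d + 1) → ℤ) (s : ℕ) : Prop :=
  (∀ i : Fin (d + 1), i.val < d → (s : ℤ) ∣ a i) ∧
    Int.gcd (a 0 / (s : ℤ)) (s : ℤ) = 1 ∧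
    Int.gcd (a (Fin.last d)) (s : ℤ) = 1

/-- The coefficient vectors of height at most `H`. -/
noncomputable def coeffBox (d H : ℕ) : Finset (Fin (d + 1) → ℤ) :=
  Fintype.piFinset fun _ => Finset.Icc (-(H : ℤ)) H

lemma mem_coeffBox {d H : ℕ} {a : Fin (d + 1) → ℤ} :
    a ∈ coeffBox d H ↔ ∀ i, |a i| ≤ (H : ℤ) := by
  simp [coeffBox, Fintype.mem_piFinset, abs_le]

open Classical in
lemma natCard_box {d H : ℕ} (P : (Fin (d + 1) → ℤ) → Prop) :
    (Nat.card {a : Fin (d + 1) → ℤ // (∀ i, |a i| ≤ (H : ℤ)) ∧ P a} : ℤ)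
      = ∑ a ∈ coeffBox d H, if P a then 1 else 0 := by
  rw [Finset.sum_boole, Nat.subtype_card ((coeffBox d H).filter P)]
  intro a
  simp [mem_coeffBox]

lemma int_gcd_eq_one_iff (x : ℤ) (s : ℕ) :
    Int.gcd x s = 1 ↔ ∀ p : ℕ, p.Prime → p ∣ s → ¬ (p : ℤ) ∣ x := by
  rw [Int.gcd, Int.natAbs_natCast, ← Nat.coprime_iff_gcd_eq_one, Nat.coprime_comm]
  constructor
  · intro h p hp hps hx
    exact Nat.not_coprime_of_dvd_of_dvd hp.one_lt hps (Int.natCast_dvd.mp hx) h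
  · intro h
    refine Nat.coprime_of_dvd fun p hp hps hx => h p hp hps (Int.natCast_dvd.mpr hx)

/-- A squarefree natural number divides an integer as soon as all its prime factors do. -/
lemma natCast_dvd_of_forall_prime {s : ℕ} (hs : Squarefree s) (x : ℤ)
    (h : ∀ p : ℕ, p.Prime → p ∣ s → (p : ℤ) ∣ x) : (s : ℤ) ∣ x := by
  rw [Int.natCast_dvd, ← Nat.prod_primeFactors_of_squarefree hs]
  refine Finset.prod_primes_dvd _ (fun p hp => (Nat.prime_of_mem_primeFactors hp).prime) ?_
  intro p hp
  exact Int.natCast_dvd.mp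
    (h p (Nat.prime_of_mem_primeFactors hp) (Nat.dvd_of_mem_primeFactors hp))

lemma hCond_iff_forall_prime {d s : ℕ} (hd : 0 < d) (hs : Squarefree s)
    (a : Fin (d + 1) → ℤ) :
    HCond a s ↔ ∀ p : ℕ, p.Prime → p ∣ s → IsEis a p := by
  have hs0 : (s : ℤ) ≠ 0 := by exact_mod_cast hs.ne_zero
  unfold HCond IsEis
  rw [int_gcd_eq_one_iff, int_gcd_eq_one_iff]
  constructor
  · rintro ⟨h1, h2, h3⟩ p hp hps
    refine ⟨fun i hi => (Int.natCast_dvd_natCast.mpr hps).trans (h1 i hi), ?_, h3 p hp hps⟩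
    intro hsq
    apply h2 p hp hps
    obtain ⟨t, rfl⟩ := hps
    obtain ⟨k, hk⟩ := h1 0 (by simpa using hd)
    rw [hk, Int.mul_ediv_cancel_left _ hs0]
    rw [hk] at hsq
    -- As `p * t` is squarefree, `p` is coprime to `t`, so `p ^ 2 ∣ p * t * k` gives `p ∣ k`.
    have hpt : Nat.Coprime p t := Nat.coprime_of_squarefree_mul hs
    have hp0 : (p : ℤ) ≠ 0 := by exact_mod_cast hp.ne_zero
    push_cast at hsq
    rw [pow_two, mul_assoc, mul_dvd_mul_iff_left hp0] at hsq
    exact (Nat.isCoprime_iff_coprime.mpr hpt).dvd_of_dvd_mul_left hsq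
  · intro h
    have h1 : ∀ i : Fin (d + 1), i.val < d → (s : ℤ) ∣ a i := fun i hi =>
      natCast_dvd_of_forall_prime hs _ fun p hp hps => (h p hp hps).1 i hi
    refine ⟨h1, ?_, fun p hp hps => (h p hp hps).2.2⟩
    intro p hp hps hdiv
    apply (h p hp hps).2.1
    rw [← Int.mul_ediv_cancel' (h1 0 (by simpa using hd)), pow_two]
    exact mul_dvd_mul (Int.natCast_dvd_natCast.mpr hps) hdiv

open Classical in
/-- The Eisenstein primes of `a`, as a subset of the prime factors of `a 0`. This loses no prime:
if `a 0 = 0` there is no Eisenstein prime. -/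
noncomputable def eisPrimes {d : ℕ} (a : Fin (d + 1) → ℤ) : Finset ℕ :=
  (a 0).natAbs.primeFactors.filter (IsEis a)

lemma mem_eisPrimes {d : ℕ} (hd : 0 < d) {a : Fin (d + 1) → ℤ} {p : ℕ} :
    p ∈ eisPrimes a ↔ p.Prime ∧ IsEis a p := by
  simp only [eisPrimes, Finset.mem_filter, Nat.mem_primeFactors]
  constructor
  · rintro ⟨⟨hp, -, -⟩, h⟩
    exact ⟨hp, h⟩
  · rintro ⟨hp, h⟩
    refine ⟨⟨hp, Int.natCast_dvd.mp (h.1 0 (by simpa using hd)), ?_⟩, h⟩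
    intro h0
    exact h.2.1 (by simp [Int.natAbs_eq_zero.mp h0])

/-- For squarefree `s`, the condition defining `H_d(s,H)` says that `s` divides the product of the
Eisenstein primes. -/
lemma hCond_iff_dvd_prod {d s : ℕ} (hd : 0 < d) (hs : Squarefree s) (a : Fin (d + 1) → ℤ) :
    HCond a s ↔ s ∣ ∏ p ∈ eisPrimes a, p := by
  rw [hCond_iff_forall_prime hd hs]
  constructor
  · intro h
    rw [← Nat.prod_primeFactors_of_squarefree hs]
    refine Finset.prod_dvd_prod_of_subset _ _ _ fun p hp => ?_
    have hp' := Nat.prime_of_mem_primeFactors hp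
    exact (mem_eisPrimes hd).mpr ⟨hp', h p hp' (Nat.dvd_of_mem_primeFactors hp)⟩
  · intro h p hp hps
    obtain ⟨q, hq, hpq⟩ := (hp.prime.dvd_finsetProd_iff _).mp (hps.trans h)
    obtain ⟨hq1, hq2⟩ := (mem_eisPrimes hd).mp hq
    rwa [(Nat.prime_dvd_prime_iff_eq hp hq1).mp hpq]

lemma prod_eisPrimes_eq_one_iff {d : ℕ} (hd : 0 < d) (a : Fin (d + 1) → ℤ) :
    ∏ p ∈ eisPrimes a, p = 1 ↔ ¬ ∃ p : ℕ, p.Prime ∧ IsEis a p := by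
  rw [Finset.prod_eq_one_iff]
  constructor
  · rintro h ⟨p, hp, hE⟩
    exact hp.one_lt.ne' (h p ((mem_eisPrimes hd).mpr ⟨hp, hE⟩))
  · intro h p hp
    exact absurd ⟨p, (mem_eisPrimes hd).mp hp⟩ h

open Classical in
lemma prod_eisPrimes_le {d H : ℕ} (hd : 0 < d) (hH : 1 ≤ H) {a : Fin (d + 1) → ℤ}
    (ha : |a 0| ≤ (H : ℤ)) : ∏ p ∈ eisPrimes a, p ≤ H := by
  by_cases h : a 0 = 0
  · simpa [eisPrimes, h] using hH
  · have hdvd : ∏ p ∈ eisPrimes a, p ∣ (a 0).natAbs :=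
      Finset.prod_primes_dvd _ (fun p hp => ((mem_eisPrimes hd).mp hp).1.prime) fun p hp =>
        Nat.dvd_of_mem_primeFactors (Finset.mem_filter.mp hp).1
    have := Nat.le_of_dvd (Int.natAbs_pos.mpr h) hdvd
    rw [Int.abs_eq_natAbs] at ha
    omega

open Classical in
/-- The contribution of a single coefficient vector to the Möbius sum. -/
lemma sum_moebius_hCond {d H : ℕ} (hd : 0 < d) (hH : 1 ≤ H) {a : Fin (d + 1) → ℤ}
    (ha : |a 0| ≤ (H : ℤ)) :
    ∑ s ∈ Finset.Icc 2 H, ArithmeticFunction.moebius s * (if HCond a s then (1 : ℤ) else 0)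
      = -(if ∃ p : ℕ, p.Prime ∧ IsEis a p then 1 else 0) := by
  set N := ∏ p ∈ eisPrimes a, p with hN
  have hNH : N ≤ H := prod_eisPrimes_le hd hH ha
  have hN0 : N ≠ 0 := Finset.prod_ne_zero_iff.mpr fun p hp =>
    ((mem_eisPrimes hd).mp hp).1.ne_zero
  have hterm : ∀ s : ℕ, ArithmeticFunction.moebius s * (if HCond a s then (1 : ℤ) else 0)
      = if s ∣ N then ArithmeticFunction.moebius s else 0 := by
    intro s
    by_cases hs : Squarefree s
    · simp [hCond_iff_dvd_prod hd hs, ← hN]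
    · simp [ArithmeticFunction.moebius_eq_zero_of_not_squarefree hs]
  have hdiv : (Finset.Icc 2 H).filter (· ∣ N) = N.divisors.erase 1 := by
    ext s
    simp only [Finset.mem_filter, Finset.mem_Icc, Finset.mem_erase, Nat.mem_divisors]
    constructor
    · rintro ⟨⟨h2, -⟩, h⟩
      exact ⟨by omega, h, hN0⟩
    · rintro ⟨h1, h, -⟩
      have := Nat.le_of_dvd (Nat.pos_of_ne_zero hN0) h
      have := Nat.pos_of_dvd_of_pos h (Nat.pos_of_ne_zero hN0)
      exact ⟨by omega, h⟩
  have hmu : ∑ s ∈ N.divisors, ArithmeticFunction.moebius s = if N = 1 then 1 else 0 := by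
    rw [← ArithmeticFunction.coe_mul_zeta_apply, ArithmeticFunction.moebius_mul_coe_zeta,
      ArithmeticFunction.one_apply]
  have h1 : 1 ∈ N.divisors := by simp [hN0]
  rw [← Finset.add_sum_erase _ _ h1, ArithmeticFunction.moebius_apply_one] at hmu
  rw [Finset.sum_congr rfl fun s _ => hterm s, ← Finset.sum_filter, hdiv]
  have hiff := prod_eisPrimes_eq_one_iff hd a
  rw [← hN] at hiff
  by_cases hE : ∃ p : ℕ, p.Prime ∧ IsEis a p
  · rw [if_neg (fun h => hiff.mp h hE)] at hmu
    rw [if_pos hE]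
    linarith
  · rw [if_pos (hiff.mpr hE)] at hmu
    rw [if_neg hE]
    linarith

theorem Fcount_eq_neg_sum_moebius_Hcount (d H : ℕ) (hd : 2 ≤ d) (hH : 1 ≤ H) :
    (Fcount d H : ℤ)
      = -∑ s ∈ Finset.Icc 2 H, ArithmeticFunction.moebius s * (Hcount d s H : ℤ) := by
  classical
  have hF : (Fcount d H : ℤ)
      = ∑ a ∈ coeffBox d H, if ∃ p : ℕ, p.Prime ∧ IsEis a p then 1 else 0 :=
    natCard_box (fun a => ∃ p : ℕ, p.Prime ∧ IsEis a p)
  have hHc : ∀ s : ℕ, (Hcount d s H : ℤ)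
      = ∑ a ∈ coeffBox d H, if HCond a s then 1 else 0 :=
    fun s => natCard_box (fun a => HCond a s)
  simp only [hF, hHc, Finset.mul_sum]
  rw [Finset.sum_comm, ← Finset.sum_neg_distrib]
  refine Finset.sum_congr rfl fun a ha => ?_
  rw [sum_moebius_hCond (by omega) hH (mem_coeffBox.mp ha 0), neg_neg]
end
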